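/- arXiv:1511.06230 — 10 statements merged into one kernel-verified Lean document; each statement's English description precedes it below -/
import Mathlib

section
/- For every 1 ≤ i ≤ ν/2 and any two elements x > y of S^0 ∪ S^1 ∪ ⋯ ∪ S^i, one has x − y ≥ s^{ν−2i+1}. -/
/-- The set `S^i` of the description of the Weierstrass semigroup `H(Q_ν)` of the
ν-th function field of the Garcia–Stichtenoth tower over `𝔽_q`, `q = s^2`. -/
def Sset (s ν i : ℕ) : Set ℕ :=
  if i = 0 then {0}
  else {x | ∃ k, 1 ≤ k ∧ k ≤ s ^ i - s ^ (i - 1) ∧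
        x = s ^ ν - s ^ (ν - i + 1) + k * s ^ (ν - 2 * i + 1)}

/-- For `1 ≤ i ≤ ν/2` and any `x > y` in `S^0 ∪ S^1 ∪ ⋯ ∪ S^i`, one has
`x - y ≥ s^(ν - 2i + 1)`. -/
theorem stmt4 (s ν : ℕ) (hs : 2 ≤ s) (hν : Even ν) (hν0 : 0 < ν)
    (i : ℕ) (hi1 : 1 ≤ i) (hi2 : i ≤ ν / 2)
    (x y : ℕ) (hx : x ∈ ⋃ r ≤ i, Sset s ν r) (hy : y ∈ ⋃ r ≤ i, Sset s ν r)
    (hxy : y < x) :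
    s ^ (ν - 2 * i + 1) ≤ x - y := by
  have key : ∀ z ∈ ⋃ r ≤ i, Sset s ν r, s ^ (ν - 2 * i + 1) ∣ z := by
    intro z hz
    simp only [Set.mem_iUnion] at hz
    obtain ⟨r, hr, hz⟩ := hz
    unfold Sset at hz
    split_ifs at hz with h0
    · rw [Set.mem_singleton_iff] at hz
      rw [hz]
      exact dvd_zero _
    · obtain ⟨k, _, _, rfl⟩ := hz
      refine dvd_add (Nat.dvd_sub ?_ ?_) (Dvd.dvd.mul_left ?_ k)
      · exact pow_dvd_pow s (by omega)
      · exact pow_dvd_pow s (by omega)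
      · exact pow_dvd_pow s (by omega)
  exact Nat.le_of_dvd (by omega) (Nat.dvd_sub (key x hx) (key y hy))
end

section
/- The number of gaps of H equals (s^{ν/2} − 1)²; that is, #(ℕ \ H) = (s^{ν/2} − 1)², which is the genus g_ν of the ν-th function field of the Garcia–Stichtenoth tower when ν is even. -/
/-- The set `S^∞ = {n : n ≥ c + 1}` where `c = s^ν - s^(ν/2)` is the conductor. -/
def Sinf (s ν : ℕ) : Set ℕ := {n | s ^ ν - s ^ (ν / 2) + 1 ≤ n}

/-- The Weierstrass semigroup `H = S^0 ∪ S^1 ∪ ⋯ ∪ S^(ν/2) ∪ S^∞ ⊆ ℕ`. -/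
def Hsemi (s ν : ℕ) : Set ℕ := (⋃ i ≤ ν / 2, Sset s ν i) ∪ Sinf s ν

theorem aux7 (s m : ℕ) (hs : 2 ≤ s) (j : ℕ) (hj : j ≤ m) :
    ∃ A : Finset ℕ, (∀ x, x ∈ A ↔ ∃ i ≤ j, x ∈ Sset s (2 * m) i) ∧
      (∀ x ∈ A, x ≤ s ^ (2 * m) - s ^ (2 * m - j)) ∧ A.card = s ^ j := by
  induction j with
  | zero =>
    refine ⟨{0}, ?_, ?_, ?_⟩
    · intro x; simp [Sset]
    · simp
    · simp
  | succ j ih =>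
    obtain ⟨A, hA, hb, hc⟩ := ih (by omega)
    have e1 : 2 * m - (j + 1) + 1 = 2 * m - j := by omega
    have hpos : ∀ n, 0 < s ^ n := fun n => pow_pos (by omega) n
    set d := s ^ (2 * m - 2 * (j + 1) + 1) with hd
    have hd0 : 0 < d := hpos _
    have h1 : s ^ (j + 1) * d = s ^ (2 * m - j) := by
      rw [hd, ← pow_add]; congr 1; omega
    have h2 : s ^ j * d = s ^ (2 * m - (j + 1)) := by
      rw [hd, ← pow_add]; congr 1; omega
    have h3 : s ^ (2 * m - j) ≤ s ^ (2 * m) := Nat.pow_le_pow_right (by omega) (by omega)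
    have h4 : s ^ j ≤ s ^ (j + 1) := Nat.pow_le_pow_right (by omega) (by omega)
    let f : ℕ → ℕ := fun k => s ^ (2 * m) - s ^ (2 * m - j) + k * d
    have hf : Function.Injective f := by
      intro a b hab
      have : a * d = b * d := by simpa [f] using hab
      exact Nat.eq_of_mul_eq_mul_right hd0 this
    have hmem : ∀ x, x ∈ (Finset.Icc 1 (s ^ (j + 1) - s ^ j)).image f ↔
        x ∈ Sset s (2 * m) (j + 1) := by
      intro x
      simp only [Sset, Finset.mem_image, Finset.mem_Icc, f, e1, hd]
      simp only [Nat.add_eq_zero_iff, one_ne_zero, and_false, if_false, Set.mem_setOf_eq,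
        Nat.add_sub_cancel]
      constructor
      · rintro ⟨k, ⟨a, b⟩, rfl⟩; exact ⟨k, a, b, rfl⟩
      · rintro ⟨k, a, b, rfl⟩; exact ⟨k, ⟨a, b⟩, rfl⟩
    refine ⟨A ∪ (Finset.Icc 1 (s ^ (j + 1) - s ^ j)).image f, ?_, ?_, ?_⟩
    · intro x
      rw [Finset.mem_union, hmem, hA]
      constructor
      · rintro (⟨i, hi, hx⟩ | hx)
        · exact ⟨i, by omega, hx⟩
        · exact ⟨j + 1, le_rfl, hx⟩
      · rintro ⟨i, hi, hx⟩
        rcases Nat.lt_or_ge i (j + 1) with h | h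
        · exact Or.inl ⟨i, by omega, hx⟩
        · obtain rfl : i = j + 1 := by omega
          exact Or.inr hx
    · have h5 : s ^ (2 * m - (j + 1)) ≤ s ^ (2 * m - j) :=
        Nat.pow_le_pow_right (by omega) (by omega)
      intro x hx
      rcases Finset.mem_union.1 hx with hx | hx
      · have := hb x hx
        omega
      · obtain ⟨k, hk, rfl⟩ := Finset.mem_image.1 hx
        have h6 : k * d ≤ (s ^ (j + 1) - s ^ j) * d :=
          Nat.mul_le_mul_right _ (Finset.mem_Icc.1 hk).2
        rw [Nat.sub_mul, h1, h2] at h6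
        simp only [f]
        omega
    · rw [Finset.card_union_of_disjoint, Finset.card_image_of_injective _ hf, hc]
      · simp only [Nat.card_Icc]; omega
      · rw [Finset.disjoint_left]
        intro x hx hx'
        obtain ⟨k, hk, rfl⟩ := Finset.mem_image.1 hx'
        have h6 : 1 * d ≤ k * d := Nat.mul_le_mul_right _ (Finset.mem_Icc.1 hk).1
        have := hb _ hx
        simp only [f] at this
        omega

/-- The number of gaps of `H` equals `(s^(ν/2) - 1)^2`, the genus of the ν-th
function field of the Garcia–Stichtenoth tower for ν even. -/
theorem stmt7 (s ν : ℕ) (hs : 2 ≤ s) (hν : Even ν) (hν0 : 0 < ν) :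
    {n : ℕ | n ∉ Hsemi s ν}.ncard = (s ^ (ν / 2) - 1) ^ 2 := by
  obtain ⟨m, rfl⟩ := hν
  obtain ⟨A, hA, hb, hc⟩ := aux7 s m hs m le_rfl
  have e : m + m = 2 * m := by omega
  have e2 : 2 * m / 2 = m := by omega
  have e3 : 2 * m - m = m := by omega
  rw [e, e2]
  rw [e3] at hb
  have hset : {n : ℕ | n ∉ Hsemi s (2 * m)} =
      ((Finset.range (s ^ (2 * m) - s ^ m + 1) \ A : Finset ℕ) : Set ℕ) := by
    ext x
    simp only [Hsemi, Sinf, e2, Set.mem_setOf_eq, Set.mem_union, Set.mem_iUnion,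
      Finset.coe_sdiff, Set.mem_diff, Finset.mem_coe, Finset.mem_range, hA, exists_prop,
      not_or, not_le]
    exact and_comm
  rw [hset, Set.ncard_coe_finset, Finset.card_sdiff_of_subset, Finset.card_range, hc]
  · have h0 : 0 < s ^ m := pow_pos (by omega) m
    obtain ⟨t, ht⟩ : ∃ t, s ^ m = t + 1 := ⟨s ^ m - 1, by omega⟩
    have : s ^ (2 * m) = t ^ 2 + 2 * t + 1 := by
      rw [mul_comm, pow_mul, ht]; ring
    rw [this, ht, Nat.add_sub_cancel]
    omega
  · intro x hx
    have := hb x hx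
    simp only [Finset.mem_range]
    omega
end

section
/- Any gap between consecutive elements of H is at most s^{ν−1}: for every x ∈ H with x > 0 there exists y ∈ H with y < x and x − y ≤ s^{ν−1}. Moreover this bound is attained, since 0 and s^{ν−1} are consecutive elements of H. -/
lemma Hsemi_end (s ν i : ℕ) (hs : 2 ≤ s) (hi : 2 * i ≤ ν) :
    s ^ ν - s ^ (ν - i) ∈ Hsemi s ν := by
  left
  simp only [Set.mem_iUnion]
  refine ⟨i, by omega, ?_⟩
  unfold Sset
  by_cases h : i = 0
  · simp [h]
  · rw [if_neg h]
    have h1 : s ^ (i - 1) < s ^ i := Nat.pow_lt_pow_right (by omega) (by omega)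
    refine ⟨s ^ i - s ^ (i - 1), by omega, le_rfl, ?_⟩
    rw [Nat.sub_mul, ← pow_add, ← pow_add]
    have e1 : i + (ν - 2 * i + 1) = ν - i + 1 := by omega
    have e2 : i - 1 + (ν - 2 * i + 1) = ν - i := by omega
    rw [e1, e2]
    have h2 : s ^ (ν - i) ≤ s ^ (ν - i + 1) := Nat.pow_le_pow_right (by omega) (by omega)
    have h3 : s ^ (ν - i + 1) ≤ s ^ ν := Nat.pow_le_pow_right (by omega) (by omega)
    omega

lemma Hsemi_end_ge (s ν j : ℕ) (hs : 2 ≤ s) (hj : 1 ≤ j) (hν : 0 < ν) :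
    s ^ (ν - 1) ≤ s ^ ν - s ^ (ν - j) := by
  have h1 : s ^ (ν - j) ≤ s ^ (ν - 1) := Nat.pow_le_pow_right (by omega) (by omega)
  have h2 : s ^ ν = s ^ (ν - 1) * s := by
    rw [← pow_succ]; congr 1; omega
  have h3 : s ^ (ν - 1) * 2 ≤ s ^ (ν - 1) * s := Nat.mul_le_mul_left _ hs
  omega

/-- Any gap between consecutive elements of `H` is at most `s^(ν-1)`: every
positive `x ∈ H` has a predecessor `y ∈ H` with `x - y ≤ s^(ν-1)`. The bound is
attained: `0` and `s^(ν-1)` are consecutive elements of `H`. -/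
theorem stmt8 (s ν : ℕ) (hs : 2 ≤ s) (hν : Even ν) (hν0 : 0 < ν) :
    (∀ x ∈ Hsemi s ν, 0 < x → ∃ y ∈ Hsemi s ν, y < x ∧ x - y ≤ s ^ (ν - 1)) ∧
    (0 : ℕ) ∈ Hsemi s ν ∧ s ^ (ν - 1) ∈ Hsemi s ν ∧
    (∀ z ∈ Hsemi s ν, ¬(0 < z ∧ z < s ^ (ν - 1))) := by
  obtain ⟨m, hm⟩ := hν
  have hdiv : ν / 2 = m := by omega
  have hc : s ^ ν - s ^ (ν / 2) = s ^ ν - s ^ (ν - m) := by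
    congr 2; omega
  have hpos : 1 ≤ s ^ (ν - 1) := Nat.one_le_pow _ _ (by omega)
  refine ⟨?_, ?_, ?_, ?_⟩
  · intro x hx hx0
    rcases hx with hx | hx
    · simp only [Set.mem_iUnion] at hx
      obtain ⟨i, hi, hx⟩ := hx
      by_cases h : i = 0
      · simp [Sset, h] at hx
        omega
      · have hx' := hx
        unfold Sset at hx
        rw [if_neg h] at hx
        obtain ⟨k, hk1, hk2, rfl⟩ := hx
        have hd : s ^ (ν - 2 * i + 1) ≤ s ^ (ν - 1) :=
          Nat.pow_le_pow_right (by omega) (by omega)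
        have hd0 : 1 ≤ s ^ (ν - 2 * i + 1) := Nat.one_le_pow _ _ (by omega)
        obtain ⟨k, rfl⟩ : ∃ l, k = l + 1 := ⟨k - 1, by omega⟩
        refine ⟨s ^ ν - s ^ (ν - i + 1) + k * s ^ (ν - 2 * i + 1), ?_, ?_, ?_⟩
        · by_cases hk : k = 0
          · have := Hsemi_end s ν (i - 1) hs (by omega)
            have e : ν - (i - 1) = ν - i + 1 := by omega
            rw [e] at this
            simpa [hk] using this
          · left
            simp only [Set.mem_iUnion]
            refine ⟨i, hi, ?_⟩
            unfold Sset
            rw [if_neg h]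
            exact ⟨k, by omega, by omega, rfl⟩
        · rw [Nat.add_mul]; omega
        · rw [Nat.add_mul]; omega
    · have hx' : s ^ ν - s ^ (ν / 2) + 1 ≤ x := hx
      refine ⟨x - 1, ?_, by omega, by omega⟩
      by_cases hxc : x - 1 = s ^ ν - s ^ (ν / 2)
      · rw [hxc, hc]
        exact Hsemi_end s ν m hs (by omega)
      · right
        change s ^ ν - s ^ (ν / 2) + 1 ≤ x - 1
        omega
  · simpa using Hsemi_end s ν 0 hs (by omega)
  · left
    simp only [Set.mem_iUnion]
    refine ⟨1, by omega, ?_⟩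
    unfold Sset
    rw [if_neg one_ne_zero]
    refine ⟨1, le_rfl, by simp; omega, ?_⟩
    have e1 : ν - 1 + 1 = ν := by omega
    have e2 : ν - 2 * 1 + 1 = ν - 1 := by omega
    rw [e1, e2]; simp
  · rintro z hz ⟨hz0, hz1⟩
    rcases hz with hz | hz
    · simp only [Set.mem_iUnion] at hz
      obtain ⟨i, hi, hz⟩ := hz
      by_cases h : i = 0
      · simp [Sset, h] at hz
        omega
      · unfold Sset at hz
        rw [if_neg h] at hz
        obtain ⟨k, hk1, hk2, rfl⟩ := hz
        by_cases h1 : i = 1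
        · subst h1
          have e2 : ν - 2 * 1 + 1 = ν - 1 := by omega
          rw [e2] at hz1
          have := Nat.mul_le_mul_right (s ^ (ν - 1)) hk1
          omega
        · have := Hsemi_end_ge s ν (i - 1) hs (by omega) hν0
          have e : ν - (i - 1) = ν - i + 1 := by omega
          rw [e] at this
          omega
    · have hz' : s ^ ν - s ^ (ν / 2) + 1 ≤ z := hz
      have := Hsemi_end_ge s ν m hs (by omega) hν0
      omega
end

section
/- If μ is an integer with μ ≥ s^{ν−1}, then the union of the translates ⋃_{v=0}^{μ−1} (−v + H), taken inside ℤ, equals the set of all integers z with z ≥ −(μ−1). -/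
/-- The semigroup `H` viewed as a subset of `ℤ`. -/
def HZ (s ν : ℕ) : Set ℤ := (fun n : ℕ => (n : ℤ)) '' Hsemi s ν

lemma mul_mem_Hsemi (s ν : ℕ) (hs : 2 ≤ s) (hν : 2 ≤ ν) (k : ℕ) :
    k * s ^ (ν - 1) ∈ Hsemi s ν := by
  rcases Nat.eq_zero_or_pos k with rfl | hk
  · left
    simp only [Set.mem_iUnion]
    exact ⟨0, by omega, by simp [Sset]⟩
  rcases Nat.lt_or_ge k s with h | h
  · left
    simp only [Set.mem_iUnion]
    refine ⟨1, by omega, ?_⟩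
    have h1 : ν - 1 + 1 = ν := by omega
    have h2 : ν - 2 * 1 + 1 = ν - 1 := by omega
    simp only [Sset, one_ne_zero, if_false, Set.mem_setOf_eq]
    refine ⟨k, hk, ?_, ?_⟩
    · simp; omega
    · rw [h1, h2]; simp
  · right
    show s ^ ν - s ^ (ν / 2) + 1 ≤ k * s ^ (ν - 1)
    have e : s ^ ν = s * s ^ (ν - 1) := by
      rw [← pow_succ']; congr 1; omega
    have h3 : s * s ^ (ν - 1) ≤ k * s ^ (ν - 1) := Nat.mul_le_mul_right _ h
    have h4 : 0 < s ^ (ν / 2) := by positivity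
    have h5 : 0 < s ^ ν := by positivity
    omega

theorem stmt9 (s ν : ℕ) (hs : 2 ≤ s) (hν : Even ν) (hν0 : 0 < ν)
    (μ : ℕ) (hμ : s ^ (ν - 1) ≤ μ) :
    (⋃ v < μ, (fun h : ℤ => -(v : ℤ) + h) '' HZ s ν) =
      {z : ℤ | -((μ : ℤ) - 1) ≤ z} := by
  have hν2 : 2 ≤ ν := by
    obtain ⟨m, rfl⟩ := hν
    omega
  ext z
  simp only [Set.mem_iUnion, Set.mem_setOf_eq, HZ, Set.mem_image]
  constructor
  · rintro ⟨v, hv, _, ⟨n, _, rfl⟩, rfl⟩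
    omega
  · intro hz
    have key : ∃ k : ℕ, z ≤ ((k * s ^ (ν - 1) : ℕ) : ℤ) ∧
        ((k * s ^ (ν - 1) : ℕ) : ℤ) < z + μ := by
      have hP : 0 < s ^ (ν - 1) := by positivity
      generalize s ^ (ν - 1) = P at *
      rcases le_or_gt z 0 with h | h
      · refine ⟨0, ?_, ?_⟩ <;> simp <;> omega
      · lift z to ℕ using h.le
        refine ⟨(z + P - 1) / P, ?_, ?_⟩
        · have := Nat.div_add_mod' (z + P - 1) P
          have := Nat.mod_lt (z + P - 1) hP
          omega
        · have := Nat.div_mul_le_self (z + P - 1) P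
          omega
    obtain ⟨k, h1, h2⟩ := key
    refine ⟨(((k * s ^ (ν - 1) : ℕ) : ℤ) - z).toNat, by omega, _,
      ⟨_, mul_mem_Hsemi s ν hs hν2 k, rfl⟩, ?_⟩
    omega
end

section
/- If μ is an integer with μ ≥ s^{ν−1}, then Z(H, μ, μ) = #{ α ∈ ℤ : α ∈ ⋃_{v=1}^{μ−1} (−v + H) and α ∉ H } = g + μ − 1, where g = #(ℕ \ H) is the number of gaps of H. -/
theorem Hsemi_zero_mem (s ν : ℕ) : 0 ∈ Hsemi s ν := by
  left
  simp only [Set.mem_iUnion]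
  exact ⟨0, Nat.zero_le _, by simp [Sset]⟩

theorem Hsemi_mul_mem (s ν : ℕ) (hs : 2 ≤ s) (hν : Even ν) (hν0 : 0 < ν) (k : ℕ) :
    k * s ^ (ν - 1) ∈ Hsemi s ν := by
  have hp : s ^ ν = s * s ^ (ν - 1) := by
    rw [← pow_succ']; congr 1; omega
  have h2 : 2 ≤ ν := by obtain ⟨r, hr⟩ := hν; omega
  rcases Nat.eq_zero_or_pos k with rfl | hk
  · simpa using Hsemi_zero_mem s ν
  by_cases hks : k < s
  · left
    simp only [Set.mem_iUnion]
    refine ⟨1, by omega, ?_⟩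
    simp only [Sset, one_ne_zero, if_false, Set.mem_ofPred_eq]
    refine ⟨k, hk, by simp; omega, ?_⟩
    have e1 : ν - 1 + 1 = ν := by omega
    have e2 : ν - 2 * 1 + 1 = ν - 1 := by omega
    rw [e1, e2]; simp
  · right
    have h1 : s ^ ν ≤ k * s ^ (ν - 1) := by
      rw [hp]; exact Nat.mul_le_mul_right _ (by omega)
    have h3 : 0 < s ^ (ν / 2) := by positivity
    have h4 : 0 < s ^ ν := by positivity
    simp only [Sinf, Set.mem_ofPred_eq]
    omega

/-- If `μ ≥ s^(ν-1)` then `Z(H, μ, μ) = #{α ∈ ⋃_{v=1}^{μ-1}(-v + H) : α ∉ H}`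
equals `g + μ - 1`, where `g = #(ℕ \ H)` is the number of gaps of `H`. -/
theorem stmt10 (s ν : ℕ) (hs : 2 ≤ s) (hν : Even ν) (hν0 : 0 < ν)
    (μ : ℕ) (hμ : s ^ (ν - 1) ≤ μ) :
    {α : ℤ | (∃ v : ℕ, 1 ≤ v ∧ v ≤ μ - 1 ∧ ∃ h ∈ Hsemi s ν, α = -(v : ℤ) + (h : ℤ)) ∧
        α ∉ HZ s ν}.ncard
      = {n : ℕ | n ∉ Hsemi s ν}.ncard + μ - 1 := by
  have hM : 0 < s ^ (ν - 1) := by positivity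
  have hfin : {n : ℕ | n ∉ Hsemi s ν}.Finite := by
    refine (Set.finite_Iic (s ^ ν - s ^ (ν / 2))).subset ?_
    intro n hn
    by_contra h
    apply hn
    right
    simp only [Sinf, Set.mem_ofPred_eq]
    simp only [Set.mem_Iic] at h
    omega
  have key : {α : ℤ | (∃ v : ℕ, 1 ≤ v ∧ v ≤ μ - 1 ∧
        ∃ h ∈ Hsemi s ν, α = -(v : ℤ) + (h : ℤ)) ∧ α ∉ HZ s ν}
      = ((fun n : ℕ => (n : ℤ)) '' {n : ℕ | n ∉ Hsemi s ν})
        ∪ (Finset.Ico (-((μ : ℤ) - 1)) 0 : Finset ℤ) := by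
    ext α
    simp only [Set.mem_ofPred_eq, Set.mem_union, Set.mem_image, Finset.coe_Ico, Set.mem_Ico, HZ]
    constructor
    · rintro ⟨⟨v, hv1, hv2, h, hh, rfl⟩, hn⟩
      by_cases hneg : -(v : ℤ) + (h : ℤ) < 0
      · right; omega
      · left
        refine ⟨h - v, fun hc => hn ⟨h - v, hc, ?_⟩, ?_⟩ <;> omega
    · rintro (⟨n, hn, rfl⟩ | ⟨h1, h2⟩)
      · refine ⟨?_, ?_⟩
        · have hdm := Nat.div_add_mod n (s ^ (ν - 1))
          have hlt := Nat.mod_lt n hM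
          have hne : n % s ^ (ν - 1) ≠ 0 := by
            intro h0
            apply hn
            have := Hsemi_mul_mem s ν hs hν hν0 (n / s ^ (ν - 1))
            rwa [Nat.div_mul_cancel (Nat.dvd_of_mod_eq_zero h0)] at this
          refine ⟨s ^ (ν - 1) - n % s ^ (ν - 1), Nat.sub_pos_of_lt hlt, ?_, _,
            Hsemi_mul_mem s ν hs hν hν0 (n / s ^ (ν - 1) + 1), ?_⟩
          · have := Nat.pos_of_ne_zero hne
            generalize n % s ^ (ν - 1) = B at *
            generalize s ^ (ν - 1) = C at *
            omega
          have e : (n / s ^ (ν - 1) + 1) * s ^ (ν - 1)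
              = s ^ (ν - 1) * (n / s ^ (ν - 1)) + s ^ (ν - 1) := by ring
          rw [e]
          generalize s ^ (ν - 1) * (n / s ^ (ν - 1)) = A at *
          generalize n % s ^ (ν - 1) = B at *
          generalize s ^ (ν - 1) = C at *
          omega
        · rintro ⟨m, hm, hmn⟩
          have : m = n := by exact_mod_cast hmn
          exact hn (this ▸ hm)
      · refine ⟨⟨(-α).toNat, by omega, by omega, 0, Hsemi_zero_mem s ν, by omega⟩, ?_⟩
        rintro ⟨m, hm, hmn⟩
        omega
  rw [key, Set.ncard_union_eq _ (hfin.image _) (Finset.finite_toSet _),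
    Set.ncard_image_of_injective _ Nat.cast_injective, Set.ncard_coe_finset, Int.card_Ico]
  · omega
  · rw [Set.disjoint_left]
    rintro _ ⟨n, _, rfl⟩ h
    simp at h
    omega
end

section
/- Let u be an integer with 0 ≤ u ≤ ν/2, let A^0(u) = S^0 ∪ S^1 ∪ ⋯ ∪ S^{ν/2−u}, and let t_1 < t_2 < ⋯ < t_{m−1} be integers with −s^{2u+1} < t_1 and t_{m−1} ≤ −1. Then the translates t_1 + A^0(u), …, t_{m−1} + A^0(u) are pairwise disjoint, each of them is disjoint from H, and consequently the union ⋃_{v=1}^{m−1} (t_v + A^0(u)) has exactly (m−1)·s^{ν/2−u} elements, none of which lies in H. -/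
/-- The set `A^0(u) = S^0 ∪ S^1 ∪ ⋯ ∪ S^(ν/2 - u)`, viewed inside `ℤ`. -/
def A0 (s ν u : ℕ) : Set ℤ := (fun n : ℕ => (n : ℤ)) '' (⋃ r ≤ ν / 2 - u, Sset s ν r)

theorem sset_bounds (s h i x : ℕ) (hs : 2 ≤ s) (hi : 1 ≤ i) (hih : i ≤ h)
    (hx : x ∈ Sset s (2 * h) i) :
    s ^ (2 * h) < x + s ^ (2 * h - i + 1) ∧ x + s ^ (2 * h - i) ≤ s ^ (2 * h) ∧
      s ^ (2 * h - 2 * i + 1) ∣ x := by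
  rw [Sset, if_neg (by omega)] at hx
  obtain ⟨k, hk1, hk2, rfl⟩ := hx
  have hp : 0 < s ^ (2 * h - 2 * i + 1) := by positivity
  have hle : s ^ (2 * h - i + 1) ≤ s ^ (2 * h) := Nat.pow_le_pow_right (by omega) (by omega)
  have hk3 : k + s ^ (i - 1) ≤ s ^ i := by
    have : s ^ (i - 1) ≤ s ^ i := Nat.pow_le_pow_right (by omega) (by omega)
    omega
  have e1 : s ^ i * s ^ (2 * h - 2 * i + 1) = s ^ (2 * h - i + 1) := by
    rw [← pow_add]; congr 1; omega
  have e2 : s ^ (i - 1) * s ^ (2 * h - 2 * i + 1) = s ^ (2 * h - i) := by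
    rw [← pow_add]; congr 1; omega
  have h1 := Nat.mul_le_mul_right (s ^ (2 * h - 2 * i + 1)) hk3
  rw [add_mul, e1, e2] at h1
  have h2 := Nat.mul_le_mul_right (s ^ (2 * h - 2 * i + 1)) hk1
  refine ⟨by omega, by omega, ?_⟩
  refine dvd_add (Nat.dvd_sub ?_ ?_) (Dvd.intro_left k rfl)
  · exact pow_dvd_pow s (by omega)
  · exact pow_dvd_pow s (by omega)

theorem bset_le (s h n i x : ℕ) (hs : 2 ≤ s) (hn : n ≤ h) (hi : i ≤ n)
    (hx : x ∈ Sset s (2 * h) i) : x + s ^ (2 * h - n) ≤ s ^ (2 * h) := by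
  have hm : s ^ (2 * h - n) ≤ s ^ (2 * h - i) := Nat.pow_le_pow_right (by omega) (by omega)
  rcases Nat.eq_zero_or_pos i with rfl | hi0
  · simp [Sset] at hx
    subst hx
    simpa using hm
  · have := (sset_bounds s h i x hs hi0 (by omega) hx).2.1
    omega

theorem bset_dvd (s h u i x : ℕ) (hs : 2 ≤ s) (hu : u ≤ h) (hi : i ≤ h - u)
    (hx : x ∈ Sset s (2 * h) i) : s ^ (2 * u + 1) ∣ x := by
  rcases Nat.eq_zero_or_pos i with rfl | hi0
  · simp [Sset] at hx
    subst hx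
    simp
  · exact (pow_dvd_pow s (by omega)).trans (sset_bounds s h i x hs hi0 (by omega) hx).2.2

theorem sset_card (s h i : ℕ) (hs : 2 ≤ s) (hi : 1 ≤ i) :
    (Sset s (2 * h) i).Finite ∧ (Sset s (2 * h) i).ncard = s ^ i - s ^ (i - 1) := by
  have he : Sset s (2 * h) i =
      ((Finset.Icc 1 (s ^ i - s ^ (i - 1))).image
        (fun k => s ^ (2 * h) - s ^ (2 * h - i + 1) + k * s ^ (2 * h - 2 * i + 1)) : Finset ℕ) := by
    ext x
    rw [Sset, if_neg (by omega)]
    simp only [Set.mem_setOf_eq, Finset.coe_image, Set.mem_image, Finset.mem_coe, Finset.mem_Icc]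
    constructor
    · rintro ⟨k, a, b, rfl⟩
      exact ⟨k, ⟨a, b⟩, rfl⟩
    · rintro ⟨k, ⟨a, b⟩, rfl⟩
      exact ⟨k, a, b, rfl⟩
  rw [he]
  refine ⟨Finset.finite_toSet _, ?_⟩
  rw [Set.ncard_coe_finset, Finset.card_image_of_injective]
  · simp
  · intro a b hab
    have hp : 0 < s ^ (2 * h - 2 * i + 1) := by positivity
    exact Nat.eq_of_mul_eq_mul_right hp (Nat.add_left_cancel hab)

theorem bset_card (s h n : ℕ) (hs : 2 ≤ s) (hn : n ≤ h) :
    (⋃ r ≤ n, Sset s (2 * h) r).Finite ∧ (⋃ r ≤ n, Sset s (2 * h) r).ncard = s ^ n := by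
  induction n with
  | zero => simp [Sset]
  | succ n ih =>
    obtain ⟨f1, c1⟩ := ih (by omega)
    obtain ⟨f2, c2⟩ := sset_card s h (n + 1) hs (by omega)
    have he : (⋃ r ≤ n + 1, Sset s (2 * h) r) =
        (⋃ r ≤ n, Sset s (2 * h) r) ∪ Sset s (2 * h) (n + 1) := by
      ext x
      simp only [Set.mem_iUnion, Set.mem_union, exists_prop]
      constructor
      · rintro ⟨r, hr, hx⟩
        rcases Nat.lt_or_ge n r with h' | h'
        · obtain rfl : r = n + 1 := by omega
          exact Or.inr hx
        · exact Or.inl ⟨r, h', hx⟩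
      · rintro (⟨r, hr, hx⟩ | hx)
        · exact ⟨r, by omega, hx⟩
        · exact ⟨n + 1, le_rfl, hx⟩
    rw [he]
    refine ⟨f1.union f2, ?_⟩
    rw [Set.ncard_union_eq _ f1 f2, c1, c2]
    · have : s ^ n ≤ s ^ (n + 1) := Nat.pow_le_pow_right (by omega) (by omega)
      simp only [Nat.add_sub_cancel]
      omega
    · rw [Set.disjoint_left]
      intro x hx hx2
      simp only [Set.mem_iUnion, exists_prop] at hx
      obtain ⟨r, hr, hx⟩ := hx
      have h1 := bset_le s h n r x hs (by omega) hr hx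
      have h2 := (sset_bounds s h (n + 1) x hs (by omega) hn hx2).1
      rw [show 2 * h - (n + 1) + 1 = 2 * h - n by omega] at h2
      omega

theorem mem_A0 (s h u : ℕ) (a : ℤ) (ha : a ∈ A0 s (2 * h) u) :
    ∃ r x : ℕ, r ≤ h - u ∧ x ∈ Sset s (2 * h) r ∧ a = x := by
  obtain ⟨x, hx, rfl⟩ := ha
  simp only [Set.mem_iUnion, exists_prop] at hx
  obtain ⟨r, hr, hx⟩ := hx
  exact ⟨r, x, by omega, hx, rfl⟩

theorem A0_dvd (s h u : ℕ) (hs : 2 ≤ s) (hu : u ≤ h) (a : ℤ) (ha : a ∈ A0 s (2 * h) u) :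
    (s ^ (2 * u + 1) : ℤ) ∣ a := by
  obtain ⟨r, x, hr, hx, rfl⟩ := mem_A0 s h u a ha
  exact_mod_cast bset_dvd s h u r x hs hu hr hx

theorem A0_card (s h u : ℕ) (hs : 2 ≤ s) :
    (A0 s (2 * h) u).Finite ∧ (A0 s (2 * h) u).ncard = s ^ (h - u) := by
  have := bset_card s h (h - u) hs (by omega)
  unfold A0
  rw [show 2 * h / 2 = h by omega]
  refine ⟨this.1.image _, ?_⟩
  rw [Set.ncard_image_of_injective _ Nat.cast_injective, this.2]

theorem union_card (A : Set ℤ) (N : ℕ) (hf : A.Finite) (hc : A.ncard = N) (t : ℕ → ℤ) (n : ℕ)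
    (hd : ∀ v w, 1 ≤ v → v ≤ n → 1 ≤ w → w ≤ n → v ≠ w →
      ((fun x : ℤ => t v + x) '' A) ∩ ((fun x : ℤ => t w + x) '' A) = ∅) :
    (⋃ v ∈ Set.Icc 1 n, (fun x : ℤ => t v + x) '' A).Finite ∧
    (⋃ v ∈ Set.Icc 1 n, (fun x : ℤ => t v + x) '' A).ncard = n * N := by
  induction n with
  | zero => simp
  | succ n ih =>
    obtain ⟨f1, c1⟩ := ih (fun v w a b c d e => hd v w a (by omega) c (by omega) e)
    have he : (⋃ v ∈ Set.Icc 1 (n + 1), (fun x : ℤ => t v + x) '' A) =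
        (⋃ v ∈ Set.Icc 1 n, (fun x : ℤ => t v + x) '' A) ∪ (fun x : ℤ => t (n + 1) + x) '' A := by
      rw [show Set.Icc 1 (n + 1) = Set.Icc 1 n ∪ {n + 1} by
        ext v; simp only [Set.mem_Icc, Set.mem_union, Set.mem_singleton_iff]; omega]
      rw [Set.biUnion_union, Set.biUnion_singleton]
    rw [he]
    refine ⟨f1.union (hf.image _), ?_⟩
    rw [Set.ncard_union_eq _ f1 (hf.image _), c1,
      Set.ncard_image_of_injective _ (add_right_injective (t (n + 1))), hc]
    · ring
    · rw [Set.disjoint_left]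
      intro x hx hx2
      simp only [Set.mem_iUnion, exists_prop] at hx
      obtain ⟨v, hv, hx⟩ := hx
      have := hd v (n + 1) hv.1 (by have := hv.2; omega) (by omega) le_rfl
        (by have := hv.2; omega)
      exact (Set.ext_iff.mp this x).mp ⟨hx, hx2⟩

/-- For `0 ≤ u ≤ ν/2` and integers `-s^(2u+1) < t_1 < ⋯ < t_(m-1) ≤ -1`, the
translates `t_v + A^0(u)` are pairwise disjoint, each disjoint from `H`, and
their union has exactly `(m-1)·s^(ν/2-u)` elements. -/
theorem stmt11 (s ν : ℕ) (hs : 2 ≤ s) (hν : Even ν) (hν0 : 0 < ν)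
    (u : ℕ) (hu : u ≤ ν / 2) (m : ℕ) (t : ℕ → ℤ)
    (hmono : ∀ v w, 1 ≤ v → v < w → w ≤ m - 1 → t v < t w)
    (hbd : ∀ v, 1 ≤ v → v ≤ m - 1 → -(s ^ (2 * u + 1) : ℤ) < t v ∧ t v ≤ -1) :
    (∀ v w, 1 ≤ v → v ≤ m - 1 → 1 ≤ w → w ≤ m - 1 → v ≠ w →
      ((fun x : ℤ => t v + x) '' A0 s ν u) ∩ ((fun x : ℤ => t w + x) '' A0 s ν u) = ∅) ∧
    (∀ v, 1 ≤ v → v ≤ m - 1 →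
      ((fun x : ℤ => t v + x) '' A0 s ν u) ∩ HZ s ν = ∅) ∧
    (⋃ v ∈ Set.Icc 1 (m - 1), (fun x : ℤ => t v + x) '' A0 s ν u).ncard
      = (m - 1) * s ^ (ν / 2 - u) := by
  obtain ⟨h, rfl⟩ : ∃ h, ν = 2 * h := by
    obtain ⟨h, hh⟩ := hν
    exact ⟨h, by omega⟩
  have hu' : u ≤ h := by omega
  have key : ∀ v w, 1 ≤ v → v ≤ m - 1 → 1 ≤ w → w ≤ m - 1 → v ≠ w →
      ((fun x : ℤ => t v + x) '' A0 s (2 * h) u) ∩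
        ((fun x : ℤ => t w + x) '' A0 s (2 * h) u) = ∅ := by
    intro v w hv1 hv2 hw1 hw2 hvw
    rw [Set.eq_empty_iff_forall_notMem]
    rintro y ⟨⟨a, ha, rfl⟩, ⟨b, hb, hab⟩⟩
    simp only at hab
    have hd := dvd_sub (A0_dvd s h u hs hu' a ha) (A0_dvd s h u hs hu' b hb)
    rw [show a - b = t w - t v by linarith] at hd
    have b1 := hbd v hv1 hv2
    have b2 := hbd w hw1 hw2
    have h0 := Int.eq_zero_of_abs_lt_dvd hd (by rw [abs_lt]; constructor <;> linarith)
    rcases Nat.lt_or_gt_of_ne hvw with h' | h'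
    · have := hmono v w hv1 h' hw2
      omega
    · have := hmono w v hw1 h' hv2
      omega
  refine ⟨key, ?_, ?_⟩
  · intro v hv1 hv2
    rw [Set.eq_empty_iff_forall_notMem]
    rintro y ⟨⟨a, ha, rfl⟩, ⟨x, hx, hxa⟩⟩
    simp only at hxa
    have b1 := hbd v hv1 hv2
    have hda := A0_dvd s h u hs hu' a ha
    obtain ⟨r, z, hr, hz, rfl⟩ := mem_A0 s h u a ha
    have hz1 := bset_le s h (h - u) r z hs (by omega) hr hz
    have hlt : x < z := by omega
    rcases hx with hx | hx
    · simp only [Set.mem_iUnion, exists_prop] at hx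
      obtain ⟨i, hi, hx⟩ := hx
      rcases Nat.lt_or_ge (h - u) i with h' | h'
      · have h2 := (sset_bounds s h i x hs (by omega) (by omega) hx).1
        have : s ^ (2 * h - i + 1) ≤ s ^ (2 * h - (h - u)) :=
          Nat.pow_le_pow_right (by omega) (by omega)
        omega
      · have hdx : (s ^ (2 * u + 1) : ℤ) ∣ (x : ℤ) := by
          exact_mod_cast bset_dvd s h u i x hs hu' h' hx
        have hd := dvd_sub hdx hda
        rw [show (x : ℤ) - z = t v by linarith] at hd
        have h0 := Int.eq_zero_of_abs_lt_dvd hd (by rw [abs_lt]; constructor <;> linarith)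
        omega
    · have hx' : s ^ (2 * h) - s ^ (2 * h / 2) + 1 ≤ x := hx
      have : s ^ (2 * h / 2) ≤ s ^ (2 * h - (h - u)) :=
        Nat.pow_le_pow_right (by omega) (by omega)
      omega
  · have hc := A0_card s h u hs
    rw [show 2 * h / 2 = h by omega]
    exact (union_card _ _ hc.1 hc.2 t (m - 1) key).2
end

section
/- For every integer t with 1 ≤ t ≤ c, the number of integers in the interval [c − t, c) that do not belong to H is at least ⌊ t·(1 − 1/s) ⌋ = ⌊ t(s−1)/s ⌋. -/
theorem Hsemi_dvd (s ν n : ℕ) (hν0 : 0 < ν)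
    (hn : n < s ^ ν - s ^ (ν / 2)) (h : n ∈ Hsemi s ν) : s ∣ n := by
  rcases h with h | h
  · simp only [Set.mem_iUnion] at h
    obtain ⟨i, hi, h⟩ := h
    unfold Sset at h
    split_ifs at h with h0
    · have : n = 0 := h
      simp [this]
    · obtain ⟨k, -, -, rfl⟩ := h
      refine dvd_add (Nat.dvd_sub (dvd_pow_self s (by omega)) (dvd_pow_self s (by omega))) ?_
      exact Dvd.dvd.mul_left (dvd_pow_self s (by omega)) k
  · have h' : s ^ ν - s ^ (ν / 2) + 1 ≤ n := h
    omega

theorem count_mult (s c t : ℕ) (hs : 2 ≤ s) (hc : s ∣ c) :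
    ((Finset.Ico (c - t) c).filter (fun n => s ∣ n)).card ≤ t / s := by
  have hsub : (Finset.Ico (c - t) c).filter (fun n => s ∣ n) ⊆
      (Finset.range (t / s)).image (fun j => c - s * (j + 1)) := by
    intro n hn
    simp only [Finset.mem_filter, Finset.mem_Ico] at hn
    obtain ⟨⟨h1, h2⟩, h3⟩ := hn
    obtain ⟨m, hm⟩ := Nat.dvd_sub hc h3
    have hm0 : m ≠ 0 := by
      rintro rfl
      simp at hm
      omega
    obtain ⟨j, rfl⟩ := Nat.exists_eq_succ_of_ne_zero hm0
    simp only [Finset.mem_image, Finset.mem_range]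
    refine ⟨j, ?_, ?_⟩
    · have : j + 1 ≤ t / s := by
        rw [Nat.le_div_iff_mul_le (by omega), mul_comm]
        change s * (j + 1) ≤ t
        change c - n = s * (j + 1) at hm
        omega
      omega
    · change c - n = s * (j + 1) at hm
      omega
  exact (Finset.card_le_card hsub).trans (Finset.card_image_le.trans (by simp))

/-- For `1 ≤ t ≤ c`, the number of integers in `[c - t, c)` not belonging to `H`
is at least `⌊t(s-1)/s⌋`. -/
theorem stmt12 (s ν : ℕ) (hs : 2 ≤ s) (hν : Even ν) (hν0 : 0 < ν)
    (t : ℕ) (ht1 : 1 ≤ t) (ht2 : t ≤ s ^ ν - s ^ (ν / 2)) :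
    t * (s - 1) / s ≤
      {n : ℕ | s ^ ν - s ^ (ν / 2) - t ≤ n ∧ n < s ^ ν - s ^ (ν / 2) ∧
        n ∉ Hsemi s ν}.ncard := by
  have hν2 : ν / 2 ≠ 0 := by
    obtain ⟨m, rfl⟩ := hν
    omega
  have hc : s ∣ s ^ ν - s ^ (ν / 2) :=
    Nat.dvd_sub (dvd_pow_self s (by omega)) (dvd_pow_self s hν2)
  have key := fun n => Hsemi_dvd s ν n hν0
  generalize s ^ ν - s ^ (ν / 2) = c at *
  have h1 : ((Finset.Ico (c - t) c).filter (fun n => ¬ s ∣ n)).card ≤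
      {n : ℕ | c - t ≤ n ∧ n < c ∧ n ∉ Hsemi s ν}.ncard := by
    rw [← Set.ncard_coe_finset]
    apply Set.ncard_le_ncard
    · intro n hn
      simp only [Finset.coe_filter, Finset.mem_Ico, Set.mem_setOf_eq] at hn ⊢
      exact ⟨hn.1.1, hn.1.2, fun h => hn.2 (key n hn.1.2 h)⟩
    · exact (Set.finite_lt_nat c).subset fun n hn => hn.2.1
  have h2 := Finset.card_filter_add_card_filter_not (s := Finset.Ico (c - t) c) (fun n => s ∣ n)
  rw [Nat.card_Ico] at h2
  have h3 := count_mult s c t hs hc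
  have h4 : t * (s - 1) / s + t / s ≤ t := by
    have ha := Nat.div_mul_le_self (t * (s - 1)) s
    have hb := Nat.div_mul_le_self t s
    obtain ⟨r, rfl⟩ : ∃ r, s = r + 1 := ⟨s - 1, by omega⟩
    simp only [Nat.add_sub_cancel] at *
    have : (t * r / (r + 1) + t / (r + 1)) * (r + 1) ≤ t * (r + 1) := by nlinarith
    exact Nat.le_of_mul_le_mul_right this (by omega)
  omega
end

section
/- Let 2 ≤ m ≤ μ be integers with μ ≤ s^{ν+1}, and let i_1 < i_2 < ⋯ < i_{m−1} be integers with −(μ−1) ≤ i_1 and i_{m−1} ≤ −1. Let u be the unique integer with s^{2u−1} ≤ −i_1 < s^{2u+1}. Then 0 ≤ u ≤ ν/2 and #{ α ∈ ℤ : α ∈ ⋃_{v=1}^{m−1} (i_v + H) and α ∉ H } ≥ (m−1)·s^{ν/2−u}. -/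
theorem aux_dvd (s N u h : ℕ) (hs : 2 ≤ s) (hu : u ≤ N)
    (hh : h ∈ Hsemi s (N + N)) (hle : h ≤ s ^ (N + N) - s ^ (N + u)) :
    s ^ (2 * u + 1) ∣ h := by
  have h2 : (N + N) / 2 = N := by omega
  have hm : s ^ (N + u) ≤ s ^ (N + N) := Nat.pow_le_pow_right (by omega) (by omega)
  have hm' : s ^ N ≤ s ^ (N + u) := Nat.pow_le_pow_right (by omega) (by omega)
  rcases hh with hh | hh
  · simp only [Set.mem_iUnion, h2] at hh
    obtain ⟨i, hi, hh⟩ := hh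
    unfold Sset at hh
    split_ifs at hh with h0
    · rw [Set.mem_singleton_iff] at hh
      simp [hh]
    · obtain ⟨k, hk1, hk2, rfl⟩ := hh
      have hpos : 0 < k * s ^ (N + N - 2 * i + 1) := by positivity
      have hlt : s ^ (N + u) < s ^ (N + N - i + 1) := by omega
      have hlt' : N + u < N + N - i + 1 := (Nat.pow_lt_pow_iff_right (by omega)).1 hlt
      apply Nat.dvd_add
      · apply Nat.dvd_sub
        · exact pow_dvd_pow _ (by omega)
        · exact pow_dvd_pow _ (by omega)
      · exact Dvd.dvd.mul_left (pow_dvd_pow _ (by omega)) _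
  · unfold Sinf at hh
    rw [Set.mem_setOf_eq, h2] at hh
    omega

theorem aux_exists (s N : ℕ) (hs : 2 ≤ s) (a : ℕ) (ha : a ≤ N) :
    ∃ F : Finset ℕ, F.card = s ^ a ∧
      ∀ h ∈ F, h ∈ Hsemi s (N + N) ∧ h ≤ s ^ (N + N) - s ^ (N + N - a) := by
  have h2 : (N + N) / 2 = N := by omega
  induction a with
  | zero =>
    refine ⟨{0}, by simp, ?_⟩
    intro h hh
    rw [Finset.mem_singleton] at hh
    subst hh
    refine ⟨Or.inl ?_, Nat.zero_le _⟩
    simp only [Set.mem_iUnion]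
    exact ⟨0, Nat.zero_le _, by simp [Sset]⟩
  | succ a ih =>
    obtain ⟨F, hF, hF'⟩ := ih (by omega)
    have e1 : N + N - (a + 1) + 1 = N + N - a := by omega
    have hpos : 0 < s ^ (N + N - 2 * (a + 1) + 1) := by positivity
    have hm1 : s ^ (N + N - a) ≤ s ^ (N + N) := Nat.pow_le_pow_right (by omega) (by omega)
    have hm2 : s ^ (N + N - (a + 1)) ≤ s ^ (N + N - a) :=
      Nat.pow_le_pow_right (by omega) (by omega)
    have hm3 : s ^ a ≤ s ^ (a + 1) := Nat.pow_le_pow_right (by omega) (by omega)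
    have hinj : Function.Injective
        (fun k : ℕ => s ^ (N + N) - s ^ (N + N - a) + k * s ^ (N + N - 2 * (a + 1) + 1)) := by
      intro k l hkl
      have hkl' : k * s ^ (N + N - 2 * (a + 1) + 1) = l * s ^ (N + N - 2 * (a + 1) + 1) :=
        Nat.add_left_cancel hkl
      exact Nat.eq_of_mul_eq_mul_right hpos hkl'
    refine ⟨F ∪ (Finset.Icc 1 (s ^ (a + 1) - s ^ a)).image
      (fun k : ℕ => s ^ (N + N) - s ^ (N + N - a) + k * s ^ (N + N - 2 * (a + 1) + 1)), ?_, ?_⟩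
    · rw [Finset.card_union_of_disjoint, Finset.card_image_of_injective _ hinj, hF,
        Nat.card_Icc]
      · omega
      · rw [Finset.disjoint_left]
        intro x hx hx'
        have hx1 := (hF' x hx).2
        rw [Finset.mem_image] at hx'
        obtain ⟨k, hk, rfl⟩ := hx'
        rw [Finset.mem_Icc] at hk
        have : 0 < k * s ^ (N + N - 2 * (a + 1) + 1) := Nat.mul_pos (by omega) hpos
        omega
    · intro h hh
      rw [Finset.mem_union] at hh
      rcases hh with hh | hh
      · obtain ⟨p, q⟩ := hF' h hh
        exact ⟨p, by omega⟩
      · rw [Finset.mem_image] at hh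
        obtain ⟨k, hk, rfl⟩ := hh
        rw [Finset.mem_Icc] at hk
        constructor
        · left
          simp only [Set.mem_iUnion]
          refine ⟨a + 1, by omega, ?_⟩
          unfold Sset
          rw [if_neg (by omega)]
          exact ⟨k, hk.1, by simpa using hk.2, by rw [e1]⟩
        · have hk' := Nat.mul_le_mul_right (s ^ (N + N - 2 * (a + 1) + 1)) hk.2
          rw [Nat.sub_mul, ← pow_add, ← pow_add] at hk'
          have e2 : a + 1 + (N + N - 2 * (a + 1) + 1) = N + N - a := by omega
          have e3 : a + (N + N - 2 * (a + 1) + 1) = N + N - (a + 1) := by omega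
          rw [e2, e3] at hk'
          omega

/-- For `2 ≤ m ≤ μ ≤ s^(ν+1)`, indices `-(μ-1) ≤ i_1 < ⋯ < i_(m-1) ≤ -1`, and
`u` the unique integer with `s^(2u-1) ≤ -i_1 < s^(2u+1)`, one has `0 ≤ u ≤ ν/2`
and `#{α ∈ ⋃_{v=1}^{m-1}(i_v + H) : α ∉ H} ≥ (m-1)·s^(ν/2-u)`. -/
theorem stmt13 (s ν : ℕ) (hs : 2 ≤ s) (hν : Even ν) (hν0 : 0 < ν)
    (m μ : ℕ) (hm : 2 ≤ m) (hmμ : m ≤ μ) (hμ : μ ≤ s ^ (ν + 1))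
    (i : ℕ → ℤ)
    (hmono : ∀ v w, 1 ≤ v → v < w → w ≤ m - 1 → i v < i w)
    (hlow : -((μ : ℤ) - 1) ≤ i 1) (hhigh : i (m - 1) ≤ -1)
    (u : ℤ)
    (hu1 : (s : ℚ) ^ (2 * u - 1) ≤ ((-(i 1) : ℤ) : ℚ))
    (hu2 : ((-(i 1) : ℤ) : ℚ) < (s : ℚ) ^ (2 * u + 1)) :
    0 ≤ u ∧ u ≤ (ν : ℤ) / 2 ∧
    ((m : ℚ) - 1) * (s : ℚ) ^ ((ν : ℤ) / 2 - u) ≤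
      ({α : ℤ | (∃ v : ℕ, 1 ≤ v ∧ v ≤ m - 1 ∧ ∃ h ∈ Hsemi s ν, α = i v + (h : ℤ)) ∧
        α ∉ HZ s ν}.ncard : ℚ) := by
  obtain ⟨N, rfl⟩ := hν
  have hs1 : (1 : ℚ) < s := by exact_mod_cast (by omega : 1 < s)
  have hN : ((N + N : ℕ) : ℤ) / 2 = N := by omega
  rw [hN]
  have hmle : ∀ v, 1 ≤ v → v ≤ m - 1 → i 1 ≤ i v ∧ i v ≤ -1 := by
    intro v h1 h2
    constructor
    · rcases Nat.eq_or_lt_of_le h1 with h | h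
      · rw [← h]
      · exact (hmono 1 v le_rfl h h2).le
    · rcases Nat.eq_or_lt_of_le h2 with h | h
      · rw [h]; exact hhigh
      · have := hmono v (m - 1) h1 h le_rfl
        omega
  have hi1 : i 1 ≤ -1 := (hmle 1 le_rfl (by omega)).2
  have hu0 : 0 ≤ u := by
    have h1 : (s : ℚ) ^ (0 : ℤ) < (s : ℚ) ^ (2 * u + 1) := by
      refine lt_of_le_of_lt ?_ hu2
      rw [zpow_zero]
      exact_mod_cast (by omega : (1 : ℤ) ≤ -(i 1))
    have := (zpow_lt_zpow_iff_right₀ hs1).1 h1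
    omega
  have huN : u ≤ (N : ℤ) := by
    have h1 : (s : ℚ) ^ (2 * u - 1) < (s : ℚ) ^ ((N + N + 1 : ℕ) : ℤ) := by
      refine lt_of_le_of_lt hu1 ?_
      rw [zpow_natCast]
      have hμ' : (μ : ℤ) ≤ (s : ℤ) ^ (N + N + 1) := by exact_mod_cast hμ
      have : -(i 1) < (s : ℤ) ^ (N + N + 1) := by omega
      exact_mod_cast this
    have := (zpow_lt_zpow_iff_right₀ hs1).1 h1
    omega
  refine ⟨hu0, huN, ?_⟩
  obtain ⟨w, rfl⟩ := Int.eq_ofNat_of_zero_le hu0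
  have hwN : w ≤ N := by exact_mod_cast huN
  have hd : -(i 1) < (s : ℤ) ^ (2 * w + 1) := by
    have e : (2 * (w : ℤ) + 1) = ((2 * w + 1 : ℕ) : ℤ) := by push_cast; ring
    rw [e, zpow_natCast] at hu2
    exact_mod_cast hu2
  obtain ⟨F, hFc, hF⟩ := aux_exists s N hs (N - w) (by omega)
  have eF : N + N - (N - w) = N + w := by omega
  rw [eF] at hF
  have hdvd : ∀ h ∈ F, ((s : ℤ) ^ (2 * w + 1)) ∣ (h : ℤ) := by
    intro h hh
    have := aux_dvd s N w h hs hwN (hF h hh).1 (hF h hh).2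
    exact_mod_cast this
  set A : Set ℤ := {α : ℤ | (∃ v : ℕ, 1 ≤ v ∧ v ≤ m - 1 ∧
    ∃ h ∈ Hsemi s (N + N), α = i v + (h : ℤ)) ∧ α ∉ HZ s (N + N)} with hA
  have hfin : A.Finite := by
    apply (Set.finite_Icc (i 1) ((s : ℤ) ^ (N + N))).subset
    rintro α ⟨⟨v, hv1, hv2, h, hh, rfl⟩, hα⟩
    have hv := hmle v hv1 hv2
    refine ⟨by omega, ?_⟩
    by_contra hlt
    push Not at hlt
    apply hα
    have hp : (0 : ℤ) ≤ (s : ℤ) ^ (N + N) := by positivity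
    refine ⟨(i v + (h : ℤ)).toNat, Or.inr ?_, ?_⟩
    · have hlt2 : ((s ^ (N + N) : ℕ) : ℤ) < i v + (h : ℤ) := by push_cast; exact hlt
      unfold Sinf
      rw [Set.mem_setOf_eq]
      omega
    · simp only
      omega
  have hinj : Set.InjOn (fun p : ℕ × ℕ => i p.1 + (p.2 : ℤ))
      (↑(Finset.Icc 1 (m - 1) ×ˢ F) : Set (ℕ × ℕ)) := by
    rintro ⟨v, h⟩ hp ⟨v', h'⟩ hp' heq
    simp only [Finset.coe_product, Set.mem_prod, Finset.mem_coe, Finset.mem_Icc] at hp hp' heq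
    have hv := hmle v hp.1.1 hp.1.2
    have hv' := hmle v' hp'.1.1 hp'.1.2
    have hz : (h : ℤ) - h' = 0 := by
      apply Int.eq_zero_of_abs_lt_dvd (dvd_sub (hdvd h hp.2) (hdvd h' hp'.2))
      rw [abs_lt]
      constructor <;> omega
    have hii : i v = i v' := by omega
    have hvv : v = v' := by
      rcases lt_trichotomy v v' with hl | hl | hl
      · have := hmono v v' hp.1.1 hl hp'.1.2
        omega
      · exact hl
      · have := hmono v' v hp'.1.1 hl hp.1.2
        omega
    rw [hvv, (by omega : h = h')]
  have hsub : (↑((Finset.Icc 1 (m - 1) ×ˢ F).image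
      (fun p : ℕ × ℕ => i p.1 + (p.2 : ℤ))) : Set ℤ) ⊆ A := by
    intro α hα
    rw [Finset.mem_coe, Finset.mem_image] at hα
    obtain ⟨⟨v, h⟩, hp, rfl⟩ := hα
    rw [Finset.mem_product, Finset.mem_Icc] at hp
    simp only at hp ⊢
    have hv := hmle v hp.1.1 hp.1.2
    refine ⟨⟨v, hp.1.1, hp.1.2, h, (hF h hp.2).1, rfl⟩, ?_⟩
    rintro ⟨x, hx, hxe⟩
    simp only at hxe
    have hle := (hF h hp.2).2
    have hxd := aux_dvd s N w x hs hwN hx (by omega)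
    have hxd' : ((s : ℤ) ^ (2 * w + 1)) ∣ (x : ℤ) := by exact_mod_cast hxd
    have hz : (h : ℤ) - x = 0 := by
      apply Int.eq_zero_of_abs_lt_dvd (dvd_sub (hdvd h hp.2) hxd')
      rw [abs_lt]
      constructor <;> omega
    omega
  have hcard := Set.ncard_le_ncard hsub hfin
  rw [Set.ncard_coe_finset, Finset.card_image_of_injOn hinj, Finset.card_product, hFc,
    Nat.card_Icc] at hcard
  have e1 : (N : ℤ) - (w : ℤ) = ((N - w : ℕ) : ℤ) := by omega
  have e2 : (m : ℚ) - 1 = ((m - 1 + 1 - 1 : ℕ) : ℚ) := by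
    rw [Nat.add_sub_cancel, Nat.cast_sub (by omega)]
    simp
  have hcast : (Int.ofNat w) = (w : ℤ) := rfl
  rw [e1, zpow_natCast, e2]
  exact_mod_cast hcard
end

section
/- For all integers 2 ≤ m ≤ μ with μ < s^{ν+1}, one has Z(H, μ, m) ≥ min{ (m−1)·q^{ν/4 − u/2} + q^{u − 1/2}(1 − q^{−1/2}) − 1 : u ∈ ℝ, log_q(m−1) − 1/2 ≤ u ≤ log_q(μ−1) + 1/2 }. -/
/-- `Z(H(Q_ν), μ, m)`: the minimum, over choices of integers
`-(μ-1) ≤ i_1 < i_2 < ⋯ < i_(m-1) ≤ -1`, of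
`#{α ∈ ⋃_{v=1}^{m-1} (i_v + H) : α ∉ H}`. -/
noncomputable def Zval (s ν μ m : ℕ) : ℕ :=
  sInf {z : ℕ | ∃ i : ℕ → ℤ,
    (∀ v w, 1 ≤ v → v < w → w ≤ m - 1 → i v < i w) ∧
    (∀ v, 1 ≤ v → v ≤ m - 1 → -((μ : ℤ) - 1) ≤ i v ∧ i v ≤ -1) ∧
    z = {α : ℤ | (∃ v : ℕ, 1 ≤ v ∧ v ≤ m - 1 ∧ ∃ h ∈ Hsemi s ν, α = i v + (h : ℤ)) ∧
          α ∉ HZ s ν}.ncard}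

/-- Elements of `H` up to `s^ν - s^(ν-i)` are divisible by `s^(ν-2i+1)`. -/
lemma H_dvd (s n i : ℕ) (hs : 2 ≤ s) (hi : i ≤ n) (x : ℕ) (hx : x ∈ Hsemi s (2 * n))
    (hle : x ≤ s ^ (2 * n) - s ^ (2 * n - i)) : s ^ (2 * n - 2 * i + 1) ∣ x := by
  have hs1 : 1 ≤ s := by omega
  rcases hx with hx | hx
  · simp only [Set.mem_iUnion] at hx
    obtain ⟨j, hj, hx⟩ := hx
    have hjn : j ≤ n := by omega
    unfold Sset at hx
    split_ifs at hx with h0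
    · simp only [Set.mem_singleton_iff] at hx
      simp [hx]
    · obtain ⟨k, hk1, hk2, rfl⟩ := hx
      by_cases hji : j ≤ i
      · have h1 : ∀ e, 2 * n - 2 * i + 1 ≤ e → s ^ (2 * n - 2 * i + 1) ∣ s ^ e :=
          fun e he => pow_dvd_pow _ he
        refine dvd_add ?_ ((h1 _ (by omega)).mul_left _)
        by_cases hi0 : j = 1
        · subst hi0
          have : 2 * n - 1 + 1 = 2 * n := by omega
          simp [this]
        · exact Nat.dvd_sub (h1 _ (by omega)) (h1 _ (by omega))
      · exfalso
        have h1 : s ^ (2 * n - j + 1) ≤ s ^ (2 * n - i) :=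
          Nat.pow_le_pow_right hs1 (by omega)
        have h2 : 0 < k * s ^ (2 * n - 2 * j + 1) := by positivity
        omega
  · exfalso
    have hx : s ^ (2 * n) - s ^ (2 * n / 2) + 1 ≤ x := hx
    have h1 : s ^ (2 * n / 2) ≤ s ^ (2 * n - i) := Nat.pow_le_pow_right hs1 (by omega)
    omega

/-- The first `s^i` elements of `H`. -/
lemma H_count (s n i : ℕ) (hs : 2 ≤ s) (hi : i ≤ n) :
    ∃ P : Finset ℕ, P.card = s ^ i ∧
      ∀ x ∈ P, x ∈ Hsemi s (2 * n) ∧ x ≤ s ^ (2 * n) - s ^ (2 * n - i) := by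
  have hs1 : 1 ≤ s := by omega
  induction i with
  | zero =>
    refine ⟨{0}, by simp, ?_⟩
    intro x hx
    simp only [Finset.mem_singleton] at hx
    subst hx
    refine ⟨Or.inl ?_, Nat.zero_le _⟩
    simp only [Set.mem_iUnion]
    exact ⟨0, Nat.zero_le _, by simp [Sset]⟩
  | succ i ih =>
    obtain ⟨P, hP, hP2⟩ := ih (by omega)
    set f : ℕ → ℕ := fun k => s ^ (2 * n) - s ^ (2 * n - (i + 1) + 1) +
      k * s ^ (2 * n - 2 * (i + 1) + 1) with hf
    have hfinj : Function.Injective f := by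
      intro a b hab
      simp only [hf] at hab
      exact Nat.eq_of_mul_eq_mul_right (by positivity) (Nat.add_left_cancel hab)
    have he : 2 * n - (i + 1) + 1 = 2 * n - i := by omega
    refine ⟨P ∪ (Finset.Icc 1 (s ^ (i + 1) - s ^ i)).image f, ?_, ?_⟩
    · rw [Finset.card_union_of_disjoint, hP, Finset.card_image_of_injective _ hfinj,
        Nat.card_Icc]
      · have : s ^ i ≤ s ^ (i + 1) := Nat.pow_le_pow_right hs1 (by omega)
        omega
      · rw [Finset.disjoint_left]
        intro x hx hx2
        obtain ⟨k, hk, rfl⟩ := Finset.mem_image.1 hx2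
        have h1 := (hP2 _ hx).2
        have hk1 := (Finset.mem_Icc.1 hk).1
        have h2 : 0 < k * s ^ (2 * n - 2 * (i + 1) + 1) := by positivity
        simp only [hf, he] at h1
        omega
    · intro x hx
      have hmono : s ^ (2 * n - (i + 1)) ≤ s ^ (2 * n - i) :=
        Nat.pow_le_pow_right hs1 (by omega)
      rcases Finset.mem_union.1 hx with hx | hx
      · have := hP2 _ hx
        exact ⟨this.1, by omega⟩
      · obtain ⟨k, hk, rfl⟩ := Finset.mem_image.1 hx
        obtain ⟨hk1, hk2⟩ := Finset.mem_Icc.1 hk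
        constructor
        · refine Or.inl ?_
          simp only [Set.mem_iUnion]
          refine ⟨i + 1, by omega, ?_⟩
          simp only [Sset, Nat.add_eq_zero_iff, one_ne_zero, and_false, if_false]
          exact ⟨k, hk1, by simpa using hk2, rfl⟩
        · simp only [hf, he]
          have h1 : k * s ^ (2 * n - 2 * (i + 1) + 1) ≤
              s ^ (2 * n - i) - s ^ (2 * n - (i + 1)) := by
            calc _ ≤ (s ^ (i + 1) - s ^ i) * s ^ (2 * n - 2 * (i + 1) + 1) :=
                  Nat.mul_le_mul_right _ hk2
              _ = _ := by
                  rw [Nat.sub_mul, ← pow_add, ← pow_add]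
                  congr 2 <;> omega
          have h2 : s ^ (2 * n - i) ≤ s ^ (2 * n) := Nat.pow_le_pow_right hs1 (by omega)
          omega

/-- Number of non-multiples of `s` just below a multiple of `s`. -/
lemma gap_count (s a : ℕ) (hs : 2 ≤ s) (c : ℤ) (hc : (s : ℤ) ∣ c) :
    ∃ E : Finset ℤ, E.card = a * (s - 1) ∧
      ∀ x ∈ E, c - (a * s : ℕ) < x ∧ x ≤ c ∧ ¬ (s : ℤ) ∣ x := by
  refine ⟨((Finset.range a) ×ˢ (Finset.Icc 1 (s - 1))).image
    (fun p => c - ((p.1 * s + p.2 : ℕ) : ℤ)), ?_, ?_⟩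
  · rw [Finset.card_image_of_injOn]
    · simp
    · rintro ⟨p1, p2⟩ hp ⟨r1, r2⟩ hr h
      simp only [Finset.coe_product, Set.mem_prod, Finset.coe_range, Set.mem_Iio,
        Finset.coe_Icc, Set.mem_Icc] at hp hr
      have h' : p1 * s + p2 = r1 * s + r2 := by
        have h : c - ((p1 * s + p2 : ℕ) : ℤ) = c - ((r1 * s + r2 : ℕ) : ℤ) := h
        omega
      have e1 : (p1 * s + p2) % s = p2 := by
        rw [mul_comm, Nat.mul_add_mod]; exact Nat.mod_eq_of_lt (by omega)
      have e2 : (r1 * s + r2) % s = r2 := by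
        rw [mul_comm, Nat.mul_add_mod]; exact Nat.mod_eq_of_lt (by omega)
      have e3 : p2 = r2 := by rw [← e1, ← e2, h']
      subst e3
      have e4 : p1 = r1 := Nat.eq_of_mul_eq_mul_right (by omega) (Nat.add_right_cancel h')
      rw [e4]
  · intro x hx
    obtain ⟨⟨p1, p2⟩, hp, rfl⟩ := Finset.mem_image.1 hx
    simp only [Finset.mem_product, Finset.mem_range, Finset.mem_Icc] at hp
    have h1 : (p1 + 1) * s ≤ a * s := Nat.mul_le_mul_right _ hp.1
    rw [add_mul, one_mul] at h1
    refine ⟨by dsimp only; omega, by dsimp only; omega, ?_⟩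
    intro hd
    have h2 : (s : ℤ) ∣ ((p1 * s + p2 : ℕ) : ℤ) := by
      have := dvd_sub hc hd
      simpa using this
    have h3 : s ∣ p1 * s + p2 := by exact_mod_cast h2
    have h4 : s ∣ p2 := (Nat.dvd_add_right (Dvd.intro_left _ rfl)).1 h3
    have := Nat.le_of_dvd (by omega) h4
    omega

lemma main_count (s n μ m u : ℕ) (hs : 2 ≤ s) (hm : 2 ≤ m) (hun : u ≤ n)
    (i : ℕ → ℤ)
    (hmono : ∀ v w, 1 ≤ v → v < w → w ≤ m - 1 → i v < i w)
    (hb : ∀ v, 1 ≤ v → v ≤ m - 1 → -((μ : ℤ) - 1) ≤ i v ∧ i v ≤ -1)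
    (hu2 : -(i 1) < (s ^ (2 * u + 1) : ℕ))
    (hu1 : 1 ≤ u → ((s ^ (2 * u - 1) : ℕ) : ℤ) ≤ -(i 1)) :
    (m - 1) * s ^ (n - u) + (if 1 ≤ u then s ^ (2 * u - 2) * (s - 1) else 0) ≤
    {α : ℤ | (∃ v : ℕ, 1 ≤ v ∧ v ≤ m - 1 ∧ ∃ h ∈ Hsemi s (2 * n), α = i v + (h : ℤ)) ∧
          α ∉ HZ s (2 * n)}.ncard := by
  have hs1 : 1 ≤ s := by omega
  set W := {α : ℤ | (∃ v : ℕ, 1 ≤ v ∧ v ≤ m - 1 ∧ ∃ h ∈ Hsemi s (2 * n), α = i v + (h : ℤ)) ∧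
          α ∉ HZ s (2 * n)} with hW
  set c : ℕ := s ^ (2 * n) - s ^ n with hc
  have hWfin : W.Finite := by
    apply (Set.finite_Icc (-(μ : ℤ)) (c : ℤ)).subset
    rintro α ⟨⟨v, hv1, hv2, h, hh, rfl⟩, hα⟩
    refine ⟨by have := hb v hv1 hv2; omega, ?_⟩
    by_contra hcon
    push Not at hcon
    apply hα
    refine ⟨(i v + h).toNat, Or.inr ?_, by dsimp only; omega⟩
    have e : 2 * n / 2 = n := by omega
    simp only [Sinf, Set.mem_ofPred_eq, e]
    omega
  obtain ⟨P, hPc, hP⟩ := H_count s n (n - u) hs (by omega)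
  have ei : 2 * n - (n - u) = n + u := by omega
  have hPd : ∀ x ∈ P, s ^ (2 * u + 1) ∣ x := by
    intro x hx
    have := H_dvd s n (n - u) hs (by omega) x (hP x hx).1 (hP x hx).2
    have e : 2 * n - 2 * (n - u) + 1 = 2 * u + 1 := by omega
    rwa [e] at this
  have hHd : ∀ x ∈ Hsemi s (2 * n), x ≤ s ^ (2 * n) - s ^ (n + u) → s ^ (2 * u + 1) ∣ x := by
    intro x hx hx2
    have := H_dvd s n (n - u) hs (by omega) x hx (by rwa [ei])
    have e : 2 * n - 2 * (n - u) + 1 = 2 * u + 1 := by omega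
    rwa [e] at this
  have hHs : ∀ x ∈ Hsemi s (2 * n), x ≤ c → s ∣ x := by
    intro x hx hx2
    have := H_dvd s n n hs le_rfl x hx (by
      have e : 2 * n - n = n := by omega
      rwa [e])
    simpa using this
  have hi1 : ∀ v, 1 ≤ v → v ≤ m - 1 → i 1 ≤ i v := by
    intro v h1 h2
    rcases Nat.lt_or_ge 1 v with h | h
    · exact (hmono 1 v le_rfl h h2).le
    · have : v = 1 := by omega
      rw [this]
  set F : ℕ × ℕ → ℤ := fun p => i p.1 + (p.2 : ℤ) with hF
  set A : Finset ℤ := ((Finset.Icc 1 (m - 1)) ×ˢ P).image F with hA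
  have hAc : A.card = (m - 1) * s ^ (n - u) := by
    rw [hA, Finset.card_image_of_injOn]
    · simp [hPc]
    · rintro ⟨v, h⟩ hp ⟨v', h'⟩ hp' heq
      simp only [Finset.coe_product, Set.mem_prod, Finset.coe_Icc, Set.mem_Icc,
        Finset.mem_coe] at hp hp'
      have heq : i v + (h : ℤ) = i v' + (h' : ℤ) := heq
      have d1 : ((s ^ (2 * u + 1) : ℕ) : ℤ) ∣ (h : ℤ) := by exact_mod_cast hPd h hp.2
      have d2 : ((s ^ (2 * u + 1) : ℕ) : ℤ) ∣ (h' : ℤ) := by exact_mod_cast hPd h' hp'.2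
      have d3 : ((s ^ (2 * u + 1) : ℕ) : ℤ) ∣ i v - i v' := by
        have : i v - i v' = h' - h := by linarith
        rw [this]
        exact dvd_sub d2 d1
      have b1 := hb v hp.1.1 hp.1.2
      have b2 := hb v' hp'.1.1 hp'.1.2
      have b3 := hi1 v hp.1.1 hp.1.2
      have b4 := hi1 v' hp'.1.1 hp'.1.2
      have d4 : i v - i v' = 0 := by
        apply Int.eq_zero_of_abs_lt_dvd d3
        rw [abs_lt]
        constructor <;> linarith
      have hv : v = v' := by
        rcases lt_trichotomy v v' with hlt | heq | hlt
        · have := hmono v v' hp.1.1 hlt hp'.1.2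
          omega
        · exact heq
        · have := hmono v' v hp'.1.1 hlt hp.1.2
          omega
      have hh : h = h' := by omega
      rw [hv, hh]
  have hAW : ∀ x ∈ A, x ∈ W ∧ x ≤ ((s ^ (2 * n) - s ^ (n + u) : ℕ) : ℤ) := by
    intro x hx
    obtain ⟨⟨v, h⟩, hp, rfl⟩ := Finset.mem_image.1 hx
    simp only [Finset.mem_product, Finset.mem_Icc] at hp
    have b1 := hb v hp.1.1 hp.1.2
    have b3 := hi1 v hp.1.1 hp.1.2
    have hh := hP h hp.2
    rw [ei] at hh
    refine ⟨⟨⟨v, hp.1.1, hp.1.2, h, hh.1, rfl⟩, ?_⟩, by simp only [hF]; omega⟩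
    rintro ⟨y, hy, hyx⟩
    have hyx : (y : ℤ) = i v + h := hyx
    have d1 : ((s ^ (2 * u + 1) : ℕ) : ℤ) ∣ (h : ℤ) := by exact_mod_cast hPd h hp.2
    have d2 : ((s ^ (2 * u + 1) : ℕ) : ℤ) ∣ (y : ℤ) := by
      exact_mod_cast hHd y hy (by omega)
    have d3 : ((s ^ (2 * u + 1) : ℕ) : ℤ) ∣ i v := by
      have : i v = y - h := by linarith
      rw [this]
      exact dvd_sub d2 d1
    have : i v = 0 := by
      apply Int.eq_zero_of_abs_lt_dvd d3
      rw [abs_lt]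
      constructor <;> linarith
    omega
  split_ifs with hu0
  · have hcd : s ∣ c := by
      rw [hc]
      exact Nat.dvd_sub (dvd_pow_self _ (by omega)) (dvd_pow_self _ (by omega))
    obtain ⟨E, hEc, hE⟩ := gap_count s (s ^ (2 * u - 2)) hs (c : ℤ) (by exact_mod_cast hcd)
    have e1 : s ^ (2 * u - 2) * s = s ^ (2 * u - 1) := by
      rw [← pow_succ]; congr 1; omega
    rw [e1] at hE
    have hEA : Disjoint A E := by
      rw [Finset.disjoint_left]
      intro x hxA hxE
      have h1 := (hAW x hxA).2
      have h2 := (hE x hxE).1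
      have h3 : s ^ n ≤ s ^ (n + u - 1) := Nat.pow_le_pow_right hs1 (by omega)
      have h4 : s ^ (2 * u - 1) ≤ s ^ (n + u - 1) := Nat.pow_le_pow_right hs1 (by omega)
      have h5 : 2 * s ^ (n + u - 1) ≤ s ^ (n + u) := by
        have : s ^ (n + u) = s * s ^ (n + u - 1) := by
          rw [← pow_succ']; congr 1; omega
        rw [this]
        exact Nat.mul_le_mul_right _ hs
      have h6 : s ^ (n + u) ≤ s ^ (2 * n) := Nat.pow_le_pow_right hs1 (by omega)
      omega
    rw [← hAc, ← hEc, ← Finset.card_union_of_disjoint hEA, ← Set.ncard_coe_finset]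
    apply Set.ncard_le_ncard _ hWfin
    intro x hx
    rcases Finset.mem_union.1 hx with hx | hx
    · exact (hAW x hx).1
    · obtain ⟨g1, g2, g3⟩ := hE x hx
      have g4 := hu1 hu0
      refine ⟨⟨1, le_rfl, by omega, (x - i 1).toNat, Or.inr ?_, by omega⟩, ?_⟩
      · have e : 2 * n / 2 = n := by omega
        simp only [Sinf, Set.mem_ofPred_eq, e]
        omega
      · rintro ⟨y, hy, hyx⟩
        have hyx : (y : ℤ) = x := hyx
        have := hHs y hy (by omega)
        apply g3
        rw [← hyx]
        exact_mod_cast this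
  · rw [add_zero, ← hAc, ← Set.ncard_coe_finset]
    exact Set.ncard_le_ncard (fun x hx => (hAW x hx).1) hWfin

/-- For `2 ≤ m ≤ μ < s^(ν+1) = q^((ν+1)/2)`, with `q = s^2`, one has
`Z(H, μ, m) ≥ min{(m-1)·q^(ν/4 - u/2) + q^(u - 1/2)(1 - q^(-1/2)) - 1 :
 log_q(m-1) - 1/2 ≤ u ≤ log_q(μ-1) + 1/2}`. -/
theorem stmt14 (s ν : ℕ) (hs : 2 ≤ s) (hν : Even ν) (hν0 : 0 < ν)
    (m μ : ℕ) (hm : 2 ≤ m) (hmμ : m ≤ μ) (hμ : μ < s ^ (ν + 1)) :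
    sInf {y : ℝ | ∃ u : ℝ,
        Real.log ((m : ℝ) - 1) / Real.log ((s : ℝ) ^ 2) - 1 / 2 ≤ u ∧
        u ≤ Real.log ((μ : ℝ) - 1) / Real.log ((s : ℝ) ^ 2) + 1 / 2 ∧
        y = ((m : ℝ) - 1) * ((s : ℝ) ^ 2) ^ ((ν : ℝ) / 4 - u / 2) +
            ((s : ℝ) ^ 2) ^ (u - 1 / 2) * (1 - ((s : ℝ) ^ 2) ^ (-(1 : ℝ) / 2)) - 1}
      ≤ (Zval s ν μ m : ℝ) := by
  obtain ⟨n, hn⟩ := hν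
  have hn2 : ν = 2 * n := by omega
  clear hn
  subst hn2
  have hs1 : 1 ≤ s := by omega
  have hmem : Zval s (2 * n) μ m ∈ {z : ℕ | ∃ i : ℕ → ℤ,
    (∀ v w, 1 ≤ v → v < w → w ≤ m - 1 → i v < i w) ∧
    (∀ v, 1 ≤ v → v ≤ m - 1 → -((μ : ℤ) - 1) ≤ i v ∧ i v ≤ -1) ∧
    z = {α : ℤ | (∃ v : ℕ, 1 ≤ v ∧ v ≤ m - 1 ∧ ∃ h ∈ Hsemi s (2 * n), α = i v + (h : ℤ)) ∧
          α ∉ HZ s (2 * n)}.ncard} := by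
    apply Nat.sInf_mem
    exact ⟨_, fun v => (v : ℤ) - m, fun v w _ h _ => by dsimp only; omega,
      fun v h1 h2 => by dsimp only; omega, rfl⟩
  obtain ⟨i, hmono, hb, hz⟩ := hmem
  obtain ⟨d, hd⟩ : ∃ d : ℕ, (d : ℤ) = -(i 1) :=
    ⟨(-(i 1)).toNat, by have := hb 1 le_rfl (by omega); omega⟩
  have hb1 := hb 1 le_rfl (by omega)
  have hd1 : 1 ≤ d := by omega
  have hdμ : d ≤ μ - 1 := by omega
  have hmd : m - 1 ≤ d := by
    have key : ∀ v, v + 1 ≤ m - 1 → i 1 + v ≤ i (v + 1) := by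
      intro v
      induction v with
      | zero => intro _; simp
      | succ v ih =>
        intro hv
        have h1 := ih (by omega)
        have h2 := hmono (v + 1) (v + 1 + 1) (by omega) (by omega) hv
        push_cast
        omega
    have h1 := key (m - 2) (by omega)
    have h2 := hb (m - 2 + 1) (by omega) (by omega)
    omega
  obtain ⟨u, hun, hu1, hu2⟩ : ∃ u : ℕ, u ≤ n ∧ (1 ≤ u → s ^ (2 * u - 1) ≤ d) ∧
      d < s ^ (2 * u + 1) := by
    have l1 : s ^ (Nat.log s d) ≤ d := Nat.pow_log_le_self s (by omega)
    have l2 : d < s ^ (Nat.log s d + 1) := Nat.lt_pow_succ_log_self (by omega) d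
    have l3 : Nat.log s d < 2 * n + 1 := by
      apply Nat.log_lt_of_lt_pow (by omega)
      omega
    refine ⟨(Nat.log s d + 1) / 2, by omega, fun h => ?_, ?_⟩
    · exact (Nat.pow_le_pow_right hs1 (by omega)).trans l1
    · exact l2.trans_le (Nat.pow_le_pow_right hs1 (by omega))
  have hcount := main_count s n μ m u hs hm hun i hmono hb (by omega)
    (fun h => by have := hu1 h; omega)
  rw [← hz] at hcount
  have hsR : (2 : ℝ) ≤ s := by exact_mod_cast hs
  have hs0 : (0 : ℝ) < s := by linarith
  have hls : 0 < Real.log (s : ℝ) := Real.log_pos (by linarith)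
  have hlog2 : Real.log ((s : ℝ) ^ 2) = 2 * Real.log s := by
    rw [Real.log_pow]; norm_num
  have hmR : (1 : ℝ) ≤ (m : ℝ) - 1 := by
    have : (2 : ℝ) ≤ m := by exact_mod_cast hm
    linarith
  have hμR : (1 : ℝ) ≤ (μ : ℝ) - 1 := by
    have : (m : ℝ) ≤ μ := by exact_mod_cast hmμ
    linarith
  have hq : ∀ x : ℝ, ((s : ℝ) ^ 2) ^ x = (s : ℝ) ^ (2 * x) := by
    intro x
    rw [Real.rpow_mul hs0.le]
    norm_num
  have hneg : ((s : ℝ) ^ 2) ^ (-(1 : ℝ) / 2) = (s : ℝ)⁻¹ := by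
    rw [hq, show 2 * (-(1 : ℝ) / 2) = -1 by ring, Real.rpow_neg_one]
  have hinv : (s : ℝ)⁻¹ ≤ 1 := inv_le_one_of_one_le₀ (by linarith)
  have hinv0 : 0 < (s : ℝ)⁻¹ := by positivity
  refine le_trans (csInf_le (a := ((m : ℝ) - 1) * ((s : ℝ) ^ 2) ^ (((2 * n : ℕ) : ℝ) / 4 - (u : ℝ) / 2) +
            ((s : ℝ) ^ 2) ^ ((u : ℝ) - 1 / 2) * (1 - ((s : ℝ) ^ 2) ^ (-(1 : ℝ) / 2)) - 1)
    ?_ ⟨(u : ℝ), ?_, ?_, rfl⟩) ?_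
  · refine ⟨-1, ?_⟩
    rintro y ⟨w, -, -, rfl⟩
    rw [hneg]
    have h1 : 0 ≤ ((m : ℝ) - 1) * ((s : ℝ) ^ 2) ^ (((2 * n : ℕ) : ℝ) / 4 - w / 2) :=
      mul_nonneg (by linarith) (by positivity)
    have h2 : 0 ≤ ((s : ℝ) ^ 2) ^ (w - 1 / 2) * (1 - (s : ℝ)⁻¹) :=
      mul_nonneg (by positivity) (by linarith)
    linarith
  · have h1 : ((m : ℝ) - 1) ≤ (s : ℝ) ^ (2 * u + 1) := by
      have : m ≤ s ^ (2 * u + 1) + 1 := by omega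
      have : (m : ℝ) ≤ (s : ℝ) ^ (2 * u + 1) + 1 := by exact_mod_cast this
      linarith
    have h2 := Real.log_le_log (by linarith) h1
    rw [Real.log_pow] at h2
    push_cast at h2
    rw [hlog2, sub_le_iff_le_add, div_le_iff₀ (by linarith)]
    linarith
  · have h0 : 0 ≤ Real.log ((μ : ℝ) - 1) := Real.log_nonneg hμR
    have h3 : (2 * (u : ℝ) - 1) * Real.log s ≤ Real.log ((μ : ℝ) - 1) := by
      rcases Nat.eq_zero_or_pos u with h | h
      · subst h
        push_cast
        linarith
      · have h1 : (s : ℝ) ^ (2 * u - 1) ≤ (μ : ℝ) - 1 := by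
          have : s ^ (2 * u - 1) + 1 ≤ μ := by have := hu1 h; omega
          have : (s : ℝ) ^ (2 * u - 1) + 1 ≤ μ := by exact_mod_cast this
          linarith
        have h2 := Real.log_le_log (by positivity) h1
        rw [Real.log_pow, Nat.cast_sub (by omega)] at h2
        push_cast at h2
        exact h2
    rw [hlog2, ← sub_le_iff_le_add, le_div_iff₀ (by linarith)]
    linarith
  · rw [hneg]
    have e1 : ((s : ℝ) ^ 2) ^ (((2 * n : ℕ) : ℝ) / 4 - (u : ℝ) / 2) = (s : ℝ) ^ (n - u) := by
      rw [hq, ← Real.rpow_natCast, Nat.cast_sub hun]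
      congr 1
      push_cast
      ring
    rw [e1]
    have hcR : ((m : ℝ) - 1) * (s : ℝ) ^ (n - u) +
        (if 1 ≤ u then (s : ℝ) ^ (2 * u - 2) * ((s : ℝ) - 1) else 0) ≤
        (Zval s (2 * n) μ m : ℝ) := by
      have h := hcount
      have h : (((m - 1) * s ^ (n - u) +
        (if 1 ≤ u then s ^ (2 * u - 2) * (s - 1) else 0) : ℕ) : ℝ) ≤
        (Zval s (2 * n) μ m : ℝ) := by exact_mod_cast h
      push_cast [Nat.cast_sub (show 1 ≤ m by omega), Nat.cast_sub hs1] at h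
      exact h
    split_ifs at hcR with hu0
    · have e2 : ((s : ℝ) ^ 2) ^ ((u : ℝ) - 1 / 2) = (s : ℝ) ^ (2 * u - 2) * s := by
        rw [hq, ← pow_succ, ← Real.rpow_natCast]
        congr 1
        rw [show 2 * u - 2 + 1 = 2 * u - 1 by omega, Nat.cast_sub (by omega)]
        push_cast
        ring
      rw [e2]
      have e3 : (s : ℝ) ^ (2 * u - 2) * s * (1 - (s : ℝ)⁻¹) =
          (s : ℝ) ^ (2 * u - 2) * ((s : ℝ) - 1) := by
        field_simp
      rw [e3]
      linarith
    · have hu : u = 0 := by omega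
      subst hu
      have e2 : ((s : ℝ) ^ 2) ^ (((0 : ℕ) : ℝ) - 1 / 2) = (s : ℝ)⁻¹ := by
        rw [← hneg]
        congr 1
        norm_num
      rw [e2]
      have : (s : ℝ)⁻¹ * (1 - (s : ℝ)⁻¹) ≤ 1 := by nlinarith
      linarith
end

section
/- For all integers 2 ≤ m ≤ μ with μ < s^{ν+1}, one has Z(H, μ, m) ≥ (m−1)·q^{ν/4 − u*/2} + q^{u* − 1/2}(1 − q^{−1/2}) − 1, where u* = (2/3)·(1 + ν/4 + log_q((m−1)/(2(√q − 1)))). (This is the bound of the paper's Theorem 2 in the case of small m; it holds for all m in the stated range because u* is the global minimizer of the function u ↦ (m−1)q^{ν/4−u/2} + q^{u−1/2}(1−q^{−1/2}) − 1 over ℝ.) -/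
lemma hsemi_cases (s n x : ℕ) (hx : x ∈ Hsemi s (2 * n)) :
    x = 0 ∨ (∃ j, 1 ≤ j ∧ j ≤ n ∧ ∃ k, 1 ≤ k ∧ k ≤ s ^ j - s ^ (j - 1) ∧
      x = s ^ (2 * n) - s ^ (2 * n - j + 1) + k * s ^ (2 * n - 2 * j + 1)) ∨
      s ^ (2 * n) - s ^ n + 1 ≤ x := by
  have h2 : 2 * n / 2 = n := by omega
  unfold Hsemi Sinf Sset at hx
  rw [h2] at hx
  simp only [Set.mem_union, Set.mem_iUnion, Set.mem_ofPred_eq] at hx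
  rcases hx with ⟨j, hj, hx⟩ | hx
  · by_cases h0 : j = 0
    · rw [if_pos h0] at hx
      left; simpa using hx
    · rw [if_neg h0] at hx
      right; left
      exact ⟨j, by omega, hj, hx⟩
  · right; right; exact hx

lemma hsemi_zero (s n : ℕ) : 0 ∈ Hsemi s (2 * n) := by
  unfold Hsemi Sset
  left
  simp only [Set.mem_iUnion]
  exact ⟨0, by omega, by simp⟩

lemma hsemi_mid (s n j k : ℕ) (h1 : 1 ≤ j) (hj : j ≤ n) (hk : 1 ≤ k)
    (hk2 : k ≤ s ^ j - s ^ (j - 1)) :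
    s ^ (2 * n) - s ^ (2 * n - j + 1) + k * s ^ (2 * n - 2 * j + 1) ∈ Hsemi s (2 * n) := by
  unfold Hsemi Sset
  left
  simp only [Set.mem_iUnion]
  refine ⟨j, by omega, ?_⟩
  rw [if_neg (by omega)]
  exact ⟨k, hk, hk2, rfl⟩

lemma hsemi_inf (s n x : ℕ) (h : s ^ (2 * n) - s ^ n + 1 ≤ x) : x ∈ Hsemi s (2 * n) := by
  have h2 : 2 * n / 2 = n := by omega
  unfold Hsemi Sinf
  right
  rw [h2]
  exact h

lemma hsemi_dvd (s n w x : ℕ) (hs : 2 ≤ s) (hw : w ≤ n) (hx : x ∈ Hsemi s (2 * n))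
    (hle : x ≤ s ^ (2 * n) - s ^ (2 * n - w)) : s ^ (2 * n - 2 * w + 1) ∣ x := by
  rcases hsemi_cases s n x hx with rfl | ⟨j, h1, hj, k, hk, hk2, rfl⟩ | h
  · exact dvd_zero _
  · by_cases hjw : j ≤ w
    · refine dvd_add (Nat.dvd_sub (pow_dvd_pow _ (by omega)) (pow_dvd_pow _ (by omega))) ?_
      exact Dvd.dvd.mul_left (pow_dvd_pow _ (by omega)) _
    · exfalso
      have ha : s ^ (2 * n - j + 1) ≤ s ^ (2 * n - w) :=
        Nat.pow_le_pow_right (by omega) (by omega)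
      have hp : 1 ≤ k * s ^ (2 * n - 2 * j + 1) := Nat.mul_pos hk (by positivity)
      omega
  · exfalso
    have ha : s ^ n ≤ s ^ (2 * n - w) := Nat.pow_le_pow_right (by omega) (by omega)
    omega

lemma exists_A (s n : ℕ) (hs : 2 ≤ s) (w : ℕ) (hw : w ≤ n) :
    ∃ A : Finset ℕ, A.card = s ^ w ∧
      ∀ h ∈ A, h ∈ Hsemi s (2 * n) ∧ h ≤ s ^ (2 * n) - s ^ (2 * n - w) := by
  induction w with
  | zero => exact ⟨{0}, by simp, by simp [hsemi_zero]⟩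
  | succ w ih =>
    obtain ⟨A, hA, hA2⟩ := ih (by omega)
    have hpp : 0 < s ^ (2 * n - 2 * (w + 1) + 1) := by positivity
    have e1 : 2 * n - (w + 1) + 1 = 2 * n - w := by omega
    let f : ℕ → ℕ := fun k => s ^ (2 * n) - s ^ (2 * n - w) + k * s ^ (2 * n - 2 * (w + 1) + 1)
    have hf : Function.Injective f := by
      intro a b hab
      have : a * s ^ (2 * n - 2 * (w + 1) + 1) = b * s ^ (2 * n - 2 * (w + 1) + 1) := by
        simp only [f] at hab; omega
      exact Nat.eq_of_mul_eq_mul_right hpp this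
    have hle : s ^ w ≤ s ^ (w + 1) := Nat.pow_le_pow_right (by omega) (by omega)
    refine ⟨A ∪ (Finset.Icc 1 (s ^ (w + 1) - s ^ w)).image f, ?_, ?_⟩
    · rw [Finset.card_union_of_disjoint, Finset.card_image_of_injective _ hf, hA]
      · simp; omega
      · rw [Finset.disjoint_left]
        intro a ha hb
        simp only [Finset.mem_image, Finset.mem_Icc] at hb
        obtain ⟨k, ⟨hk, _⟩, rfl⟩ := hb
        have h1 := (hA2 _ ha).2
        have hp : 1 ≤ k * s ^ (2 * n - 2 * (w + 1) + 1) := Nat.mul_pos hk hpp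
        simp only [f] at h1
        omega
    · intro h hh
      have hmono : s ^ (2 * n - (w + 1)) ≤ s ^ (2 * n - w) :=
        Nat.pow_le_pow_right (by omega) (by omega)
      rw [Finset.mem_union] at hh
      rcases hh with hh | hh
      · have := hA2 h hh
        exact ⟨this.1, by omega⟩
      · simp only [Finset.mem_image, Finset.mem_Icc] at hh
        obtain ⟨k, ⟨hk, hk2⟩, rfl⟩ := hh
        constructor
        · have := hsemi_mid s n (w + 1) k (by omega) hw hk (by simpa using hk2)
          rw [e1] at this
          exact this
        · have h3 := Nat.mul_le_mul_right (s ^ (2 * n - 2 * (w + 1) + 1)) hk2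
          rw [Nat.sub_mul, ← pow_add, ← pow_add,
            show w + 1 + (2 * n - 2 * (w + 1) + 1) = 2 * n - w by omega,
            show w + (2 * n - 2 * (w + 1) + 1) = 2 * n - (w + 1) by omega] at h3
          have h4 : s ^ (2 * n - w) ≤ s ^ (2 * n) := Nat.pow_le_pow_right (by omega) (by omega)
          simp only [f]
          omega

lemma hz_dvd (s n w : ℕ) (hs : 2 ≤ s) (hw : w ≤ n) (x : ℤ) (hx : x ∈ HZ s (2 * n))
    (hle : x ≤ (s : ℤ) ^ (2 * n) - (s : ℤ) ^ (2 * n - w)) :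
    (s : ℤ) ^ (2 * n - 2 * w + 1) ∣ x := by
  obtain ⟨y, hy, rfl⟩ := hx
  have h4 : s ^ (2 * n - w) ≤ s ^ (2 * n) := Nat.pow_le_pow_right (by omega) (by omega)
  have := hsemi_dvd s n w y hs hw hy (by zify [h4]; exact hle)
  simp only
  exact_mod_cast this

lemma first_part (s n : ℕ) (hs : 2 ≤ s) (w : ℕ) (hw : w ≤ n) (I : Finset ℤ)
    (hI : ∀ a ∈ I, a < 0 ∧ -a < (s : ℤ) ^ (2 * n - 2 * w + 1)) :
    ∃ B : Finset ℤ, B.card = I.card * s ^ w ∧ ∀ x ∈ B,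
      (∃ a ∈ I, ∃ h ∈ Hsemi s (2 * n), x = a + (h : ℤ)) ∧ x ∉ HZ s (2 * n) ∧
      x < (s : ℤ) ^ (2 * n) - (s : ℤ) ^ (2 * n - w) := by
  obtain ⟨A, hA, hA2⟩ := exists_A s n hs w hw
  have h4 : s ^ (2 * n - w) ≤ s ^ (2 * n) := Nat.pow_le_pow_right (by omega) (by omega)
  have hA3 : ∀ h ∈ A, (h : ℤ) ≤ (s : ℤ) ^ (2 * n) - (s : ℤ) ^ (2 * n - w) := by
    intro h hh
    have := (hA2 h hh).2
    zify [h4] at this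
    exact this
  have hA4 : ∀ h ∈ A, (s : ℤ) ^ (2 * n - 2 * w + 1) ∣ (h : ℤ) := by
    intro h hh
    exact hz_dvd s n w hs hw h ⟨h, (hA2 h hh).1, rfl⟩ (hA3 h hh)
  refine ⟨(I ×ˢ A).image (fun p => p.1 + (p.2 : ℤ)), ?_, ?_⟩
  · rw [Finset.card_image_of_injOn, Finset.card_product, hA]
    rintro ⟨a, h⟩ hp ⟨b, g⟩ hp' heq
    simp only [Finset.coe_product, Set.mem_prod, Finset.mem_coe] at hp hp' heq
    have hd : (s : ℤ) ^ (2 * n - 2 * w + 1) ∣ a - b := by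
      have : a - b = (g : ℤ) - h := by linarith
      rw [this]
      exact dvd_sub (hA4 _ hp'.2) (hA4 _ hp.2)
    have hab : a - b = 0 := by
      apply Int.eq_zero_of_abs_lt_dvd hd
      have h1 := hI a hp.1
      have h2 := hI b hp'.1
      rw [abs_lt]
      constructor <;> linarith
    have : a = b := by linarith
    subst this
    have : h = g := by omega
    rw [this]
  · intro x hx
    simp only [Finset.mem_image, Finset.mem_product] at hx
    obtain ⟨⟨a, h⟩, ⟨ha, hh⟩, rfl⟩ := hx
    simp only at ha hh ⊢
    have h1 := hI a ha
    have h3 := hA3 h hh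
    refine ⟨⟨a, ha, h, (hA2 h hh).1, rfl⟩, ?_, by linarith⟩
    intro hz
    have hd := hz_dvd s n w hs hw _ hz (by linarith)
    have hd2 := (dvd_add_left (hA4 h hh)).1 hd
    have := Int.eq_zero_of_abs_lt_dvd hd2 (by rw [abs_of_neg h1.1]; exact h1.2)
    omega

/-- Second family: the top block just below the conductor. -/
lemma second_part (s n : ℕ) (hs : 2 ≤ s) (u : ℕ) (a : ℤ)
    (ha : (s : ℤ) ^ (2 * u + 1) ≤ -a) (hu : 2 * u + 1 < 2 * n) :
    ∃ B : Finset ℤ, B.card + s ^ (2 * u) = s ^ (2 * u + 1) ∧ ∀ x ∈ B,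
      (∃ h ∈ Hsemi s (2 * n), x = a + (h : ℤ)) ∧ x ∉ HZ s (2 * n) ∧
      (s : ℤ) ^ (2 * n) - (s : ℤ) ^ n - (s : ℤ) ^ (2 * u + 1) < x := by
  have hn : 1 ≤ n := by omega
  have h4 : s ^ n ≤ s ^ (2 * n) := Nat.pow_le_pow_right (by omega) (by omega)
  have h5 : s ^ (2 * u + 1) ≤ s ^ (2 * n - 1) := Nat.pow_le_pow_right (by omega) (by omega)
  have h6 : s ^ n ≤ s ^ (2 * n - 1) := Nat.pow_le_pow_right (by omega) (by omega)
  have h7 : 2 * s ^ (2 * n - 1) ≤ s ^ (2 * n) := by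
    conv_rhs => rw [show 2 * n = (2 * n - 1) + 1 by omega, pow_succ, mul_comm]
    exact Nat.mul_le_mul_right _ hs
  zify at h4 h5 h6 h7
  set c : ℤ := (s : ℤ) ^ (2 * n) - (s : ℤ) ^ n with hc
  have hcd : (s : ℤ) ∣ c := dvd_sub (dvd_pow_self _ (by omega)) (dvd_pow_self _ (by omega))
  obtain ⟨c', hc'⟩ := hcd
  have hs0 : (0 : ℤ) < s := by omega
  have hinj : Function.Injective (fun y : ℕ => c - (s : ℤ) * y) := by
    intro y z h
    simp only at h
    have : (s : ℤ) * y = s * z := by linarith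
    have := mul_left_cancel₀ hs0.ne' this
    exact_mod_cast this
  let M : Finset ℤ := (Finset.range (s ^ (2 * u))).image (fun y : ℕ => c - (s : ℤ) * y)
  have hMc : M.card = s ^ (2 * u) := by
    rw [Finset.card_image_of_injective _ hinj, Finset.card_range]
  have hMsub : M ⊆ Finset.Ioc (c - (s : ℤ) ^ (2 * u + 1)) c := by
    intro x hx
    simp only [M, Finset.mem_image, Finset.mem_range] at hx
    obtain ⟨y, hy, rfl⟩ := hx
    rw [Finset.mem_Ioc]
    have hy' : (y : ℤ) < (s : ℤ) ^ (2 * u) := by exact_mod_cast hy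
    have e : (s : ℤ) ^ (2 * u + 1) = s * (s : ℤ) ^ (2 * u) := by ring
    have := mul_lt_mul_of_pos_left hy' hs0
    have h0 : (0 : ℤ) ≤ s * y := by positivity
    constructor <;> linarith
  refine ⟨Finset.Ioc (c - (s : ℤ) ^ (2 * u + 1)) c \ M, ?_, ?_⟩
  · have := Finset.card_sdiff_add_card_eq_card hMsub
    rw [hMc, Int.card_Ioc] at this
    rw [this, show c - (c - (s : ℤ) ^ (2 * u + 1)) = ((s ^ (2 * u + 1) : ℕ) : ℤ) by
      push_cast; ring, Int.toNat_natCast]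
  · intro x hx
    rw [Finset.mem_sdiff, Finset.mem_Ioc] at hx
    obtain ⟨⟨hx1, hx2⟩, hx3⟩ := hx
    refine ⟨⟨(x - a).toNat, ?_, ?_⟩, ?_, hx1⟩
    · apply hsemi_inf
      zify [show s ^ n ≤ s ^ (2 * n) by exact_mod_cast h4]
      rw [Int.toNat_of_nonneg (by linarith)]
      rw [← hc]
      linarith [Int.add_one_le_iff.2 hx1]
    · rw [Int.toNat_of_nonneg (by linarith)]; ring
    · intro hz
      apply hx3
      have hd := hz_dvd s n n hs le_rfl x hz (by
        rw [show 2 * n - n = n by omega]; exact hx2)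
      rw [show 2 * n - 2 * n + 1 = 1 by omega, pow_one] at hd
      obtain ⟨x', rfl⟩ := hd
      simp only [M, Finset.mem_image, Finset.mem_range]
      have hnn : 0 ≤ c' - x' := by
        rw [hc'] at hx2
        have := le_of_mul_le_mul_left hx2 hs0
        linarith
      refine ⟨(c' - x').toNat, ?_, ?_⟩
      · zify
        rw [Int.toNat_of_nonneg hnn]
        have e : (s : ℤ) ^ (2 * u + 1) = s * (s : ℤ) ^ (2 * u) := by ring
        apply lt_of_mul_lt_mul_left _ hs0.le
        rw [← e, mul_sub, ← hc']
        linarith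
      · rw [Int.toNat_of_nonneg hnn, mul_sub, ← hc']; ring

lemma core (s n : ℕ) (hs : 2 ≤ s) (hn : 1 ≤ n) (I : Finset ℤ) (hne : I.Nonempty)
    (hI : ∀ a ∈ I, a < 0 ∧ -a < (s : ℤ) ^ (2 * n + 1)) :
    let N := {x : ℤ | (∃ a ∈ I, ∃ h ∈ Hsemi s (2 * n), x = a + (h : ℤ)) ∧
      x ∉ HZ s (2 * n)}.ncard
    I.card * s ^ n ≤ N ∨ ∃ u w, u + 1 + w = n ∧
      I.card * s ^ w + s ^ (2 * u + 1) ≤ N + s ^ (2 * u) := by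
  intro N
  set S := {x : ℤ | (∃ a ∈ I, ∃ h ∈ Hsemi s (2 * n), x = a + (h : ℤ)) ∧
      x ∉ HZ s (2 * n)} with hS
  have h4 : s ^ n ≤ s ^ (2 * n) := Nat.pow_le_pow_right (by omega) (by omega)
  have hfin : S.Finite := by
    apply (Set.finite_Icc (-(s : ℤ) ^ (2 * n + 1)) ((s : ℤ) ^ (2 * n))).subset
    rintro x ⟨⟨a, ha, h, hh, rfl⟩, hx⟩
    have h1 := hI a ha
    constructor
    · have : (0 : ℤ) ≤ h := by positivity
      linarith
    · by_contra hcon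
      push Not at hcon
      apply hx
      have h0 : (0 : ℤ) ≤ (s : ℤ) ^ (2 * n) := by positivity
      refine ⟨(a + h).toNat, ?_, ?_⟩
      · apply hsemi_inf
        zify [h4]
        rw [Int.toNat_of_nonneg (by linarith)]
        have : (0 : ℤ) < (s : ℤ) ^ n := by
          have : (0 : ℤ) < s := by omega
          positivity
        linarith
      · simp only
        rw [Int.toNat_of_nonneg (by linarith)]
  have hle : ∀ B : Finset ℤ, (∀ x ∈ B, x ∈ S) → B.card ≤ N := by
    intro B hB
    rw [← Set.ncard_coe_finset]
    exact Set.ncard_le_ncard hB hfin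
  set a := I.min' hne with ha
  have haI : a ∈ I := Finset.min'_mem _ _
  have hmin : ∀ b ∈ I, a ≤ b := fun b hb => Finset.min'_le _ _ hb
  -- the largest admissible w
  let P : ℕ → Prop := fun w => -a < (s : ℤ) ^ (2 * n - 2 * w + 1)
  classical
  have hP0 : P 0 := (hI a haI).2
  let w := Nat.findGreatest P n
  have hPw : P w := Nat.findGreatest_spec (m := 0) (Nat.zero_le _) hP0
  have hwn : w ≤ n := Nat.findGreatest_le n
  obtain ⟨B, hB, hB2⟩ := first_part s n hs w hwn I (fun b hb =>
    ⟨(hI b hb).1, by have := hmin b hb; have h : -a < (s : ℤ) ^ (2 * n - 2 * w + 1) := hPw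
                     linarith⟩)
  by_cases hw : w = n
  · left
    have e : I.card * s ^ n = B.card := by rw [hB, hw]
    rw [e]
    exact hle B (fun x hx => ⟨(hB2 x hx).1, (hB2 x hx).2.1⟩)
  · right
    have hnP : ¬ P (w + 1) := Nat.findGreatest_is_greatest (Nat.lt_succ_self _) (by omega)
    refine ⟨n - w - 1, w, by omega, ?_⟩
    simp only [P, not_lt] at hnP
    rw [show 2 * n - 2 * (w + 1) + 1 = 2 * (n - w - 1) + 1 by omega] at hnP
    obtain ⟨C, hC, hC2⟩ := second_part s n hs (n - w - 1) a hnP (by omega)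
    have hdis : Disjoint B C := by
      rw [Finset.disjoint_left]
      intro x hx hx'
      have h1 := (hB2 x hx).2.2
      have h2 := (hC2 x hx').2.2
      have h5 : s ^ (2 * (n - w - 1) + 1) ≤ s ^ (2 * n - w - 1) :=
        Nat.pow_le_pow_right (by omega) (by omega)
      have h6 : s ^ n ≤ s ^ (2 * n - w - 1) := Nat.pow_le_pow_right (by omega) (by omega)
      have h7 : 2 * s ^ (2 * n - w - 1) ≤ s ^ (2 * n - w) := by
        conv_rhs => rw [show 2 * n - w = (2 * n - w - 1) + 1 by omega, pow_succ, mul_comm]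
        exact Nat.mul_le_mul_right _ hs
      zify at h5 h6 h7
      linarith
    have := hle (B ∪ C) (by
      intro x hx
      rw [Finset.mem_union] at hx
      rcases hx with hx | hx
      · exact ⟨(hB2 x hx).1, (hB2 x hx).2.1⟩
      · exact ⟨⟨a, haI, (hC2 x hx).1⟩, (hC2 x hx).2.1⟩)
    rw [Finset.card_union_of_disjoint hdis, hB] at this
    omega

lemma zval_core (s n m μ : ℕ) (hs : 2 ≤ s) (hn : 1 ≤ n) (hm : 2 ≤ m) (hmμ : m ≤ μ)
    (hμ : μ < s ^ (2 * n + 1)) :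
    (m - 1) * s ^ n ≤ Zval s (2 * n) μ m ∨ ∃ u w, u + 1 + w = n ∧
      (m - 1) * s ^ w + s ^ (2 * u + 1) ≤ Zval s (2 * n) μ m + s ^ (2 * u) := by
  have hmem := Nat.sInf_mem (s := {z : ℕ | ∃ i : ℕ → ℤ,
    (∀ v w, 1 ≤ v → v < w → w ≤ m - 1 → i v < i w) ∧
    (∀ v, 1 ≤ v → v ≤ m - 1 → -((μ : ℤ) - 1) ≤ i v ∧ i v ≤ -1) ∧
    z = {α : ℤ | (∃ v : ℕ, 1 ≤ v ∧ v ≤ m - 1 ∧ ∃ h ∈ Hsemi s (2 * n), α = i v + (h : ℤ)) ∧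
          α ∉ HZ s (2 * n)}.ncard}) ⟨_, fun v => (v : ℤ) - m, by intros; simp only; omega,
            by intros; simp only; omega, rfl⟩
  obtain ⟨i, hi1, hi2, hz⟩ := hmem
  change Zval s (2 * n) μ m = _ at hz
  have hinj : Set.InjOn i (Finset.Icc 1 (m - 1) : Finset ℕ) := by
    intro v hv w hw h
    simp only [Finset.coe_Icc, Set.mem_Icc] at hv hw
    rcases lt_trichotomy v w with hl | hl | hl
    · have := hi1 v w hv.1 hl hw.2; omega
    · exact hl
    · have := hi1 w v hw.1 hl hv.2; omega
  have hcard : ((Finset.Icc 1 (m - 1)).image i).card = m - 1 := by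
    rw [Finset.card_image_of_injOn hinj]; simp
  have hne : ((Finset.Icc 1 (m - 1)).image i).Nonempty := by
    rw [← Finset.card_pos, hcard]; omega
  have h := core s n hs hn ((Finset.Icc 1 (m - 1)).image i) hne (by
    intro a ha
    simp only [Finset.mem_image, Finset.mem_Icc] at ha
    obtain ⟨v, hv, rfl⟩ := ha
    have := hi2 v hv.1 hv.2
    zify at hμ
    constructor <;> linarith)
  simp only [hcard] at h
  have hset : {x : ℤ | (∃ a ∈ (Finset.Icc 1 (m - 1)).image i, ∃ h ∈ Hsemi s (2 * n),
      x = a + (h : ℤ)) ∧ x ∉ HZ s (2 * n)} =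
      {α : ℤ | (∃ v : ℕ, 1 ≤ v ∧ v ≤ m - 1 ∧ ∃ h ∈ Hsemi s (2 * n), α = i v + (h : ℤ)) ∧
          α ∉ HZ s (2 * n)} := by
    ext x
    simp [and_assoc]
  rw [hset, ← hz] at h
  exact h

/-- Analytic part: any real exponent of the form `x = s^u` gives a weaker bound. -/
lemma amgm (a b t x : ℝ) (hb : 0 ≤ b) (ht : 0 < t) (hx : 0 < x) (h : a = 2 * b * t ^ 3) :
    a / t + b * t ^ 2 ≤ a / x + b * x ^ 2 := by
  have e1 : a / t + b * t ^ 2 = 3 * b * t ^ 2 := by subst h; field_simp; ring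
  have e2 : a / x + b * x ^ 2 - 3 * b * t ^ 2 = b * ((x - t) ^ 2 * (x + 2 * t)) / x := by
    subst h; field_simp; ring
  have : 0 ≤ b * ((x - t) ^ 2 * (x + 2 * t)) / x := by positivity
  linarith

/-- For `2 ≤ m ≤ μ < s^(ν+1)`, with `q = s^2` and
`u* = (2/3)(1 + ν/4 + log_q((m-1)/(2(√q - 1))))`, one has
`Z(H, μ, m) ≥ (m-1)·q^(ν/4 - u*/2) + q^(u* - 1/2)(1 - q^(-1/2)) - 1`. -/
theorem stmt15 (s ν : ℕ) (hs : 2 ≤ s) (hν : Even ν) (hν0 : 0 < ν)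
    (m μ : ℕ) (hm : 2 ≤ m) (hmμ : m ≤ μ) (hμ : μ < s ^ (ν + 1))
    (q : ℝ) (hq : q = (s : ℝ) ^ 2)
    (ustar : ℝ)
    (hustar : ustar = (2 / 3) * (1 + (ν : ℝ) / 4 +
      Real.log (((m : ℝ) - 1) / (2 * (Real.sqrt q - 1))) / Real.log q)) :
    ((m : ℝ) - 1) * q ^ ((ν : ℝ) / 4 - ustar / 2) +
        q ^ (ustar - 1 / 2) * (1 - q ^ (-(1 : ℝ) / 2)) - 1
      ≤ (Zval s ν μ m : ℝ) := by
  obtain ⟨n, rfl⟩ : ∃ n, ν = 2 * n := by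
    obtain ⟨n, rfl⟩ := hν; exact ⟨n, by ring⟩
  have hn : 1 ≤ n := by omega
  have hsR : (2 : ℝ) ≤ s := by exact_mod_cast hs
  have hs0 : (0 : ℝ) < s := by linarith
  have hMR : (1 : ℝ) ≤ (m : ℝ) - 1 := by
    have : (2 : ℝ) ≤ m := by exact_mod_cast hm
    linarith
  have hq' : ∀ y : ℝ, q ^ y = (s : ℝ) ^ (2 * y) := by
    intro y
    rw [hq, ← Real.rpow_natCast, ← Real.rpow_mul hs0.le]; norm_num
  have hsq : Real.sqrt q = s := by rw [hq]; exact Real.sqrt_sq hs0.le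
  set M : ℝ := (m : ℝ) - 1 with hM
  set t : ℝ := (s : ℝ) ^ ustar with ht
  have htp : 0 < t := Real.rpow_pos_of_pos hs0 _
  set b : ℝ := ((s : ℝ) - 1) / (s : ℝ) ^ 2 with hb
  have hs1 : (0 : ℝ) < (s : ℝ) - 1 := by linarith
  have hbp : 0 ≤ b := by positivity
  have hlog : Real.log s ≠ 0 := (Real.log_pos (by linarith)).ne'
  have ht3 : t ^ 3 = M * (s : ℝ) ^ n * (s : ℝ) ^ 2 / (2 * ((s : ℝ) - 1)) := by
    have hp : 0 < M / (2 * ((s : ℝ) - 1)) := by positivity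
    apply Real.log_injOn_pos (Set.mem_Ioi.2 (by positivity)) (Set.mem_Ioi.2 (by positivity))
    rw [show M * (s : ℝ) ^ n * (s : ℝ) ^ 2 / (2 * ((s : ℝ) - 1)) =
      M / (2 * ((s : ℝ) - 1)) * ((s : ℝ) ^ n * (s : ℝ) ^ 2) by ring,
      Real.log_mul hp.ne' (by positivity), Real.log_mul (by positivity) (by positivity),
      Real.log_pow, Real.log_pow, Real.log_pow, ht, Real.log_rpow hs0, hustar, hsq, hq,
      Real.log_pow]
    push_cast
    field_simp
    ring
  have hrel : M * (s : ℝ) ^ n = 2 * b * t ^ 3 := by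
    rw [ht3, hb]; field_simp
  have hlhs : M * q ^ (((2 * n : ℕ) : ℝ) / 4 - ustar / 2) +
        q ^ (ustar - 1 / 2) * (1 - q ^ (-(1 : ℝ) / 2)) = M * (s : ℝ) ^ n / t + b * t ^ 2 := by
    rw [hq', hq', hq']
    have e1 : (s : ℝ) ^ (2 * (((2 * n : ℕ) : ℝ) / 4 - ustar / 2)) = (s : ℝ) ^ n / t := by
      rw [ht, ← Real.rpow_natCast, ← Real.rpow_sub hs0]; congr 1; push_cast; ring
    have e2 : (s : ℝ) ^ (2 * (ustar - 1 / 2)) = t ^ 2 / s := by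
      rw [show 2 * (ustar - 1 / 2) = ustar + ustar - 1 by ring, Real.rpow_sub hs0,
        Real.rpow_add hs0, Real.rpow_one, sq]
    have e3 : (s : ℝ) ^ (2 * (-(1 : ℝ) / 2)) = 1 / s := by
      rw [show (2 : ℝ) * (-1 / 2) = -1 by norm_num, Real.rpow_neg_one, one_div]
    rw [e1, e2, e3, hb]
    field_simp
  rw [hlhs]
  have hmc : ((m - 1 : ℕ) : ℝ) = M := by rw [Nat.cast_sub (by omega)]; simp [hM]
  rcases zval_core s n m μ hs hn hm hmμ hμ with h | ⟨u, w, huw, h⟩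
  · have h1 := amgm _ b t 1 hbp htp one_pos hrel
    have h2 : M * (s : ℝ) ^ n ≤ Zval s (2 * n) μ m := by
      rw [← hmc]; exact_mod_cast h
    have hb1 : b ≤ 1 := by
      rw [hb, div_le_one (by positivity)]; nlinarith
    simp only [div_one, one_pow, mul_one] at h1
    linarith
  · have h1 := amgm _ b t ((s : ℝ) ^ (u + 1)) hbp htp (by positivity) hrel
    have h2 : M * (s : ℝ) ^ w + (s : ℝ) ^ (2 * u + 1) ≤
        Zval s (2 * n) μ m + (s : ℝ) ^ (2 * u) := by
      rw [← hmc]; exact_mod_cast h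
    have e1 : M * (s : ℝ) ^ n / (s : ℝ) ^ (u + 1) = M * (s : ℝ) ^ w := by
      rw [← huw, pow_add]; field_simp
    have e2 : b * ((s : ℝ) ^ (u + 1)) ^ 2 = (s : ℝ) ^ (2 * u + 1) - (s : ℝ) ^ (2 * u) := by
      rw [hb]; field_simp; ring
    rw [e1, e2] at h1
    linarith
end
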